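/- arXiv:math/0509474 — 4 statements merged into one kernel-verified Lean document; each statement's English description precedes it below -/
import Mathlib

section
/- Let q be odd and let F be the set of all self-dual codes in F_q^{2n} (assumed nonempty). Then for each 0 ≤ m ≤ n, the subspace Y_m is exactly the eigenspace of the Kneser–Hecke operator T with eigenvalue ν_m = (q^{n−m} − q^m)/(q−1). -/
noncomputable section

namespace KneserHeckeCodes

open Finset

variable {F : Type} [Field F] [Fintype F]

/-- The all-ones vector. -/
def allOnes (F : Type) [One F] (N : ℕ) : Fin N → F := fun _ => 1

/-- The dual code with respect to the (bilinear or Hermitian) form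
`b(x,y) = ∑ i, x i * f (y i)`. -/
def dualCode {N : ℕ} (f : F → F) (C : Submodule F (Fin N → F)) : Submodule F (Fin N → F) where
  carrier := {v | ∀ c ∈ C, ∑ i, v i * f (c i) = 0}
  add_mem' := by
    intro a b ha hb c hc
    have h1 := ha c hc
    have h2 := hb c hc
    change ∑ i, a i * f (c i) = 0 at h1
    change ∑ i, b i * f (c i) = 0 at h2
    change ∑ i, (a + b) i * f (c i) = 0
    simp [Pi.add_apply, add_mul, Finset.sum_add_distrib, h1, h2]
  zero_mem' := by
    intro c hc
    simp
  smul_mem' := by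
    intro r a ha c hc
    have h := ha c hc
    change ∑ i, a i * f (c i) = 0 at h
    change ∑ i, (r • a) i * f (c i) = 0
    simp [Pi.smul_apply, smul_eq_mul, mul_assoc, ← Finset.mul_sum, h]

/-- Action of a coordinate permutation on a code. -/
def permCode {N : ℕ} (π : Equiv.Perm (Fin N)) (C : Submodule F (Fin N → F)) :
    Submodule F (Fin N → F) :=
  C.map (LinearMap.funLeft F F π)

/-- Permutation equivalence of codes. -/
def equivCode {N : ℕ} (C D : Submodule F (Fin N → F)) : Prop :=
  ∃ π : Equiv.Perm (Fin N), permCode π C = D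

/-- The order of the automorphism group of a code. -/
def autCard {N : ℕ} (C : Submodule F (Fin N → F)) : ℕ :=
  Nat.card {π : Equiv.Perm (Fin N) // permCode π C = C}

/-- `mon c v` is the number of columns of the `m × N` matrix with rows `c` equal to `v`. -/
def mon {m N : ℕ} (c : Fin m → (Fin N → F)) (v : Fin m → F) : ℕ :=
  Nat.card {i : Fin N // ∀ j, c j i = v j}

/-- `aX X C` is the number of `m`-tuples of codewords of `C` with monomial `X`. -/
def aX {m N : ℕ} (X : (Fin m → F) → ℕ) (C : Submodule F (Fin N → F)) : ℕ :=
  Nat.card {c : Fin m → (Fin N → F) // (∀ j, c j ∈ C) ∧ mon c = X}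

/-- The set `M_m` of monomials of degree `N` in genus `m`. -/
def MmSet (F : Type) [Fintype F] (m N : ℕ) : Set ((Fin m → F) → ℕ) :=
  {X | ∑ v, X v = N}

/-- The rank of a monomial. -/
def rkX (F : Type) [Field F] {m : ℕ} (X : (Fin m → F) → ℕ) : ℕ :=
  Module.finrank F (Submodule.span F {v : Fin m → F | 0 < X v})

/-- The set `M*_m` of monomials of degree `N` and full rank `m`. -/
def MstarSet (F : Type) [Field F] [Fintype F] (m N : ℕ) : Set ((Fin m → F) → ℕ) :=
  {X | X ∈ MmSet F m N ∧ rkX F X = m}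

instance finiteSubmodule {N : ℕ} : Finite (Submodule F (Fin N → F)) :=
  Finite.of_injective (fun C => (C : Set (Fin N → F))) SetLike.coe_injective

/-- The set of equivalence classes of codes in the family `𝓕`. -/
abbrev ClassesB {N : ℕ} (𝓕 : Set (Submodule F (Fin N → F))) : Type :=
  Quot (fun C D : 𝓕 => equivCode C.1 D.1)

/-- The equivalence class of a code. -/
def clsOf {N : ℕ} {𝓕 : Set (Submodule F (Fin N → F))} (C : 𝓕) : ClassesB 𝓕 :=
  Quot.mk _ C

/-- A representative of an equivalence class. -/
def repB {N : ℕ} {𝓕 : Set (Submodule F (Fin N → F))} (b : ClassesB 𝓕) : 𝓕 :=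
  Quot.out b

/-- The Hermitian inner product on `V` with `([C],[D]) = |Aut C| δ_{[C],[D]}`. -/
def innerV {N : ℕ} (𝓕 : Set (Submodule F (Fin N → F))) (v w : ClassesB 𝓕 → ℂ) : ℂ :=
  letI : Fintype (ClassesB 𝓕) := Fintype.ofFinite _
  ∑ b : ClassesB 𝓕, (starRingEnd ℂ) (v b) * w b * (autCard (repB b).1 : ℂ)

/-- The `k`-th Kneser-Hecke operator `T_k` on `V`, where `n` is the dimension of the codes:
`T_k [C] = ∑_{D ∈ 𝓕, dim (C ⊓ D) = n - k} [D]`. -/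
def heckeT {N : ℕ} (𝓕 : Set (Submodule F (Fin N → F))) (n k : ℕ)
    (v : ClassesB 𝓕 → ℂ) : ClassesB 𝓕 → ℂ :=
  letI : Fintype (ClassesB 𝓕) := Fintype.ofFinite _
  fun b' => ∑ b : ClassesB 𝓕, v b *
    (Nat.card {D : 𝓕 // Module.finrank F ↥((repB b).1 ⊓ D.1) + k = n ∧ clsOf D = b'} : ℂ)

/-- The linear extension of `a_X` to `V`. -/
def aXc {N m : ℕ} (𝓕 : Set (Submodule F (Fin N → F))) (X : (Fin m → F) → ℕ)
    (v : ClassesB 𝓕 → ℂ) : ℂ :=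
  letI : Fintype (ClassesB 𝓕) := Fintype.ofFinite _
  ∑ b : ClassesB 𝓕, v b * (aX X (repB b).1 : ℂ)

/-- `V_m`, the joint kernel of all `a_X`, `X ∈ M_m`. -/
def VmSet {N : ℕ} (𝓕 : Set (Submodule F (Fin N → F))) (m : ℕ) : Set (ClassesB 𝓕 → ℂ) :=
  {v | ∀ X ∈ MmSet F m N, aXc 𝓕 X v = 0}

/-- `V_{m-1}` (with `V_{-1} = V`). -/
def VmPred {N : ℕ} (𝓕 : Set (Submodule F (Fin N → F))) (m : ℕ) : Set (ClassesB 𝓕 → ℂ) :=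
  match m with
  | 0 => Set.univ
  | m + 1 => VmSet 𝓕 m

/-- `W_m = V_m^⊥`. -/
def WmSet {N : ℕ} (𝓕 : Set (Submodule F (Fin N → F))) (m : ℕ) : Set (ClassesB 𝓕 → ℂ) :=
  {w | ∀ v ∈ VmSet 𝓕 m, innerV 𝓕 w v = 0}

/-- `Y_m = W_m ∩ V_{m-1}`. -/
def YmSet {N : ℕ} (𝓕 : Set (Submodule F (Fin N → F))) (m : ℕ) : Set (ClassesB 𝓕 → ℂ) :=
  WmSet 𝓕 m ∩ VmPred 𝓕 m

/-- `∑_{E ∈ E_C(c)} α_E`, counted as the number of pairs `(E, D)` with `E ≤ C` of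
dimension `n-1` containing all entries of `c` and `D ∈ 𝓕` with `D ⊓ C = E`. -/
def pairCount {N : ℕ} (𝓕 : Set (Submodule F (Fin N → F))) (n : ℕ)
    (C : Submodule F (Fin N → F)) {m : ℕ} (c : Fin m → (Fin N → F)) : ℕ :=
  Nat.card {ED : Submodule F (Fin N → F) × 𝓕 //
    ED.1 ≤ C ∧ Module.finrank F ↥ED.1 + 1 = n ∧ (∀ j, c j ∈ ED.1) ∧ ED.2.1 ⊓ C = ED.1}

/-- Condition ⋆ at level `m` for the subset `M⁰ ⊆ M*_m` with constant `α`. -/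
def CondStar {N : ℕ} (𝓕 : Set (Submodule F (Fin N → F))) (n m : ℕ)
    (M0 : Set ((Fin m → F) → ℕ)) (α : ℕ) : Prop :=
  M0 ⊆ MstarSet F m N ∧
  VmSet 𝓕 m = {v | v ∈ VmPred 𝓕 m ∧ ∀ X ∈ M0, aXc 𝓕 X v = 0} ∧
  ∀ C ∈ 𝓕, ∀ c : Fin m → (Fin N → F), (∀ j, c j ∈ C) → mon c ∈ M0 →
    pairCount 𝓕 n C c = α

/-- The genus-`m` complete weight enumerator. -/
def cwe {N : ℕ} (m : ℕ) (C : Submodule F (Fin N → F)) : MvPolynomial (Fin m → F) ℂ :=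
  letI : Fintype C := Fintype.ofFinite _
  ∑ c : Fin m → C, MvPolynomial.monomial
    (Finsupp.equivFunOnFinite.symm (mon (fun j => (c j : Fin N → F)))) (1 : ℂ)

end KneserHeckeCodes

namespace KneserHeckeCodes

theorem card_hyper_top {F Q : Type} [Field F] [Fintype F] [AddCommGroup Q] [Module F Q]
    [FiniteDimensional F Q] :
    Nat.card {H : Submodule F Q // Module.finrank F H + 1 = Module.finrank F Q} *
      (Fintype.card F - 1) + 1 = Fintype.card F ^ (Module.finrank F Q) := by
  have : Finite (Module.Dual F Q) := Module.finite_of_finite F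
  have h := Projectivization.card' F (Module.Dual F Q)
  have h2 : Nat.card {H : Submodule F Q // Module.finrank F H + 1 = Module.finrank F Q} =
      Nat.card (Projectivization F (Module.Dual F Q)) := by
    refine Nat.card_congr (Equiv.trans ?_ (Projectivization.equivSubmodule F (Module.Dual F Q)).symm)
    refine Equiv.subtypeEquiv ((Subspace.orderIsoFiniteDimensional (K := F) (V := Q)).toEquiv.trans
      OrderDual.ofDual) ?_
    intro H
    have := Subspace.finrank_add_finrank_dualAnnihilator_eq (K := F) (V := Q) H
    change _ ↔ Module.finrank F (Submodule.dualAnnihilator H) = 1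
    omega
  rw [h2, ← Nat.card_eq_fintype_card (α := F), ← h, Module.natCard_eq_pow_finrank (K := F),
    Subspace.dual_finrank_eq]

theorem card_hyper {F V : Type} [Field F] [Fintype F] [AddCommGroup V] [Module F V]
    [FiniteDimensional F V] (U C : Submodule F V) (hUC : U ≤ C) :
    Nat.card {E : Submodule F V // U ≤ E ∧ E ≤ C ∧ Module.finrank F E + 1 = Module.finrank F C} *
      (Fintype.card F - 1) + 1 = Fintype.card F ^ (Module.finrank F C - Module.finrank F U) := by
  let U' : Submodule F C := U.comap C.subtype
  have hU' : Module.finrank F U' = Module.finrank F U :=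
    (Submodule.comapSubtypeEquivOfLe hUC).finrank_eq
  have hq := Submodule.finrank_quotient_add_finrank U'
  have h := card_hyper_top (F := F) (Q := C ⧸ U')
  rw [← (show Module.finrank F (C ⧸ U') = Module.finrank F C - Module.finrank F U by omega), ← h]
  congr 2
  symm
  let g : Submodule F (C ⧸ U') → Submodule F V := fun H => (H.comap U'.mkQ).map C.subtype
  have hg : ∀ H, Module.finrank F (g H) = Module.finrank F H + Module.finrank F U' := by
    intro H
    have e1 : Module.finrank F (g H) = Module.finrank F (H.comap U'.mkQ) :=
      (Submodule.equivMapOfInjective C.subtype C.subtype_injective _).finrank_eq.symm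
    have e2 := LinearMap.finrank_range_add_finrank_ker (U'.mkQ.domRestrict (H.comap U'.mkQ))
    have e3 : LinearMap.range (U'.mkQ.domRestrict (H.comap U'.mkQ)) = H := by
      rw [LinearMap.range_domRestrict, Submodule.map_comap_eq, Submodule.range_mkQ, top_inf_eq]
    have e4 : Module.finrank F (LinearMap.ker (U'.mkQ.domRestrict (H.comap U'.mkQ))) =
        Module.finrank F U' := by
      rw [LinearMap.ker_domRestrict, Submodule.ker_mkQ]
      exact (Submodule.submoduleOfEquivOfLe (by
        intro x hx
        have : U'.mkQ x = 0 := by simpa using hx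
        simp only [Submodule.mem_comap, this, H.zero_mem])).finrank_eq
    rw [e3, e4] at e2
    omega
  have hgi : Function.Injective g := by
    intro H H' hH
    have := Submodule.map_injective_of_injective C.subtype_injective hH
    exact Submodule.comap_injective_of_surjective U'.mkQ_surjective this
  refine Nat.card_congr (Equiv.ofBijective (fun H => ⟨g H.1, ?_, ?_, ?_⟩) ⟨?_, ?_⟩)
  · intro x hx
    refine ⟨⟨x, hUC hx⟩, ?_, rfl⟩
    have : U'.mkQ ⟨x, hUC hx⟩ = 0 := by
      rw [← LinearMap.mem_ker, Submodule.ker_mkQ]; exact hx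
    simp only [SetLike.mem_coe, Submodule.mem_comap, this, Submodule.zero_mem]
  · exact Submodule.map_subtype_le _ _
  · have := H.2
    rw [hg]; omega
  · intro H H' hH
    exact Subtype.ext (hgi (congrArg Subtype.val hH))
  · rintro ⟨E, h1, h2, h3⟩
    have key : g ((E.comap C.subtype).map U'.mkQ) = E := by
      simp only [g]
      rw [Submodule.comap_map_eq, Submodule.ker_mkQ, sup_eq_left.2 (Submodule.comap_mono h1),
        Submodule.map_comap_eq, Submodule.range_subtype, inf_eq_right.2 h2]
    refine ⟨⟨(E.comap C.subtype).map U'.mkQ, ?_⟩, Subtype.ext key⟩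
    have := hg ((E.comap C.subtype).map U'.mkQ)
    rw [key] at this
    omega

set_option linter.unusedSectionVars false
section Geo
variable {F V : Type} [Field F] [AddCommGroup V] [Module F V] [FiniteDimensional F V]
  {B : LinearMap.BilinForm F V}

theorem geo_le_eq {C D : Submodule F V} (hC : B.orthogonal C = C)
    (hD : B.orthogonal D = D) (h : D ≤ C) : D = C := by
  refine le_antisymm h ?_
  have := LinearMap.BilinForm.orthogonal_le (B := B) h
  rwa [hC, hD] at this

theorem geo_iso {D : Submodule F V} (hD : B.orthogonal D = D) {x y : V} (hx : x ∈ D) (hy : y ∈ D) :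
    B x y = 0 := by
  rw [← hD] at hy
  exact LinearMap.BilinForm.mem_orthogonal_iff.1 hy x hx

theorem geo_notMem (hs : ∀ x y, B x y = B y x) {C : Submodule F V} (hC : B.orthogonal C = C) {x : V}
    (hx : x ∉ C) : ∃ c ∈ C, B x c = 1 := by
  by_contra hcon
  apply hx
  rw [← hC, LinearMap.BilinForm.mem_orthogonal_iff]
  intro c hc
  by_contra h0
  apply hcon
  refine ⟨(B c x)⁻¹ • c, C.smul_mem _ hc, ?_⟩
  rw [map_smul, smul_eq_mul, hs x c, inv_mul_cancel₀ h0]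

/-- the unique neighbour through `x` -/
def nbrD (B : LinearMap.BilinForm F V) (C : Submodule F V) (x : V) : Submodule F V :=
  (C ⊓ B.orthogonal (F ∙ x)) ⊔ F ∙ x

theorem mem_orth_span (x y : V) : y ∈ B.orthogonal (F ∙ x) ↔ B x y = 0 := by
  rw [LinearMap.BilinForm.mem_orthogonal_iff]
  constructor
  · intro h; exact h x (Submodule.mem_span_singleton_self x)
  · intro h z hz
    obtain ⟨a, rfl⟩ := Submodule.mem_span_singleton.1 hz
    simp [h]

theorem nbrD_sd (hs : ∀ x y, B x y = B y x) {C : Submodule F V} (hC : B.orthogonal C = C) {x : V}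
    (hx : x ∉ C) (hxx : B x x = 0) : B.orthogonal (nbrD B C x) = nbrD B C x := by
  obtain ⟨c0, hc0, h1⟩ := geo_notMem hs hC hx
  apply le_antisymm
  · intro y hy
    rw [LinearMap.BilinForm.mem_orthogonal_iff] at hy
    have hyx : B x y = 0 := hy x (le_sup_right (a := C ⊓ B.orthogonal (F ∙ x))
      (Submodule.mem_span_singleton_self x))
    have hyC : y - (B y c0) • x ∈ C := by
      rw [← hC, LinearMap.BilinForm.mem_orthogonal_iff]
      intro c hc
      have h2 : c - (B x c) • c0 ∈ C ⊓ B.orthogonal (F ∙ x) := by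
        refine ⟨C.sub_mem hc (C.smul_mem _ hc0), ?_⟩
        rw [SetLike.mem_coe, mem_orth_span]
        simp [h1]
      have h3 := hy _ (le_sup_left (b := F ∙ x) h2)
      simp only [map_sub, map_smul, LinearMap.sub_apply, LinearMap.smul_apply, smul_eq_mul] at h3 ⊢
      rw [hs y c0, hs c x]
      linear_combination h3
    have : y = (y - (B y c0) • x) + (B y c0) • x := by abel
    rw [this]
    refine Submodule.add_mem_sup ⟨hyC, ?_⟩ (Submodule.smul_mem _ _ (Submodule.mem_span_singleton_self x))
    rw [SetLike.mem_coe, mem_orth_span]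
    simp [hyx, hxx]
  · intro y hy
    rw [LinearMap.BilinForm.mem_orthogonal_iff]
    intro z hz
    obtain ⟨e, he, w, hw, rfl⟩ := Submodule.mem_sup.1 hy
    obtain ⟨e', he', w', hw', rfl⟩ := Submodule.mem_sup.1 hz
    obtain ⟨a, rfl⟩ := Submodule.mem_span_singleton.1 hw
    obtain ⟨a', rfl⟩ := Submodule.mem_span_singleton.1 hw'
    have e1 := (mem_orth_span x e).1 he.2
    have e2 := (mem_orth_span x e').1 he'.2
    have e3 := geo_iso hC he'.1 he.1
    have e4 := hs e' x
    simp [e1, e2, e3, e4, hxx]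

theorem nbrD_inf {C : Submodule F V} {x : V} (hx : x ∉ C) :
    C ⊓ nbrD B C x = C ⊓ B.orthogonal (F ∙ x) := by
  unfold nbrD
  apply le_antisymm
  · rintro y ⟨hy, hy'⟩
    obtain ⟨e, he, w, hw, rfl⟩ := Submodule.mem_sup.1 hy'
    obtain ⟨a, rfl⟩ := Submodule.mem_span_singleton.1 hw
    have ha : a • x ∈ C := by simpa using C.sub_mem hy he.1
    have : a = 0 := by
      by_contra h
      exact hx ((C.smul_mem_iff h).1 ha)
    subst this
    simpa using he
  · exact le_inf inf_le_left le_sup_left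

theorem nbrD_finrank {C : Submodule F V} {x : V} (hx : x ∉ C) :
    Module.finrank F ↥(C ⊓ nbrD B C x) + 1 = Module.finrank F (nbrD B C x) := by
  rw [nbrD_inf hx]
  exact (Submodule.finrank_sup_span_singleton (p := C ⊓ B.orthogonal (F ∙ x))
    (fun h => hx (Submodule.mem_inf.1 h).1)).symm

theorem nbr_eq {C D : Submodule F V} {x : V} (hx : x ∉ C) (hxD : x ∈ D)
    (hdim : Module.finrank F ↥(C ⊓ D) + 1 = Module.finrank F D) : D = (C ⊓ D) ⊔ F ∙ x := by
  symm
  apply Submodule.eq_of_le_of_finrank_eq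
  · exact sup_le inf_le_right ((Submodule.span_singleton_le_iff_mem _ _).2 hxD)
  · rw [Submodule.finrank_sup_span_singleton (p := C ⊓ D)
      (fun h => hx (Submodule.mem_inf.1 h).1), hdim]

theorem nbr_unique (hs : ∀ x y, B x y = B y x) {C D : Submodule F V} (hC : B.orthogonal C = C)
    (hD : B.orthogonal D = D) {x : V} (hx : x ∉ C) (hxD : x ∈ D)
    (hdim : Module.finrank F ↥(C ⊓ D) + 1 = Module.finrank F D) : D = nbrD B C x := by
  apply geo_le_eq (nbrD_sd hs hC hx (geo_iso hD hxD hxD)) hD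
  rw [nbr_eq hx hxD hdim]
  refine sup_le_sup (le_inf inf_le_left ?_) le_rfl
  intro y hy
  rw [mem_orth_span]
  exact geo_iso hD hxD hy.2

/-- existence for hyperplanes -/
theorem nbr_exists (hs : ∀ x y, B x y = B y x) (hnd : B.Nondegenerate) (h2 : (2 : F) ≠ 0)
    {C E : Submodule F V} (hC : B.orthogonal C = C) (hE : E ≤ C)
    (hdim : Module.finrank F E + 1 = Module.finrank F C) :
    ∃ x, x ∉ C ∧ B x x = 0 ∧ C ⊓ nbrD B C x = E := by
  have hrefl : B.IsRefl := fun x y h => by rw [hs]; exact h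
  have : ∃ y ∈ B.orthogonal E, y ∉ C := by
    by_contra! hcon
    have h3 := LinearMap.BilinForm.orthogonal_le (B := B) (show B.orthogonal E ≤ C from hcon)
    rw [LinearMap.BilinForm.orthogonal_orthogonal hnd hrefl, hC] at h3
    have := le_antisymm hE h3
    rw [this] at hdim
    omega
  obtain ⟨y, hyE, hyC⟩ := this
  obtain ⟨c0, hc0, h1⟩ := geo_notMem hs hC hyC
  set x := y + (-(B y y) / 2) • c0 with hxdef
  have hxC : x ∉ C := fun h => hyC (by
    have := C.sub_mem h (C.smul_mem (-(B y y) / 2) hc0)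
    simpa [hxdef] using this)
  have hxE : E ≤ C ⊓ B.orthogonal (F ∙ x) := by
    refine le_inf hE ?_
    intro e he
    rw [mem_orth_span, hs]
    have e1 := LinearMap.BilinForm.mem_orthogonal_iff.1 hyE e he
    have e2 := geo_iso hC (hE he) hc0
    simp [hxdef, e1, e2]
  refine ⟨x, hxC, ?_, ?_⟩
  · have e1 := geo_iso hC hc0 hc0
    have e2 := hs c0 y
    simp only [hxdef, map_add, map_smul, LinearMap.add_apply, LinearMap.smul_apply, smul_eq_mul,
      e1, e2, h1]
    field_simp
    ring
  · rw [nbrD_inf hxC]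
    symm
    apply Submodule.eq_of_le_of_finrank_le hxE
    have : C ⊓ B.orthogonal (F ∙ x) < C := by
      refine lt_of_le_of_ne inf_le_left ?_
      intro h
      obtain ⟨c, hc, hc1⟩ := geo_notMem hs hC hxC
      rw [← h] at hc
      have := (mem_orth_span x c).1 hc.2
      rw [this] at hc1
      exact zero_ne_one hc1
    have := Submodule.finrank_lt_finrank_of_lt this
    omega

theorem nbr_inj (hs : ∀ x y, B x y = B y x) (h2 : (2 : F) ≠ 0)
    {C D D' : Submodule F V} (hC : B.orthogonal C = C) (hD : B.orthogonal D = D)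
    (hD' : B.orthogonal D' = D') (hDD : C ⊓ D = C ⊓ D')
    (hdim : Module.finrank F ↥(C ⊓ D) + 1 = Module.finrank F D)
    (hdim' : Module.finrank F ↥(C ⊓ D') + 1 = Module.finrank F D') : D = D' := by
  have hex : ∀ D : Submodule F V, Module.finrank F ↥(C ⊓ D) + 1 = Module.finrank F D →
      ∃ x ∈ D, x ∉ C := by
    intro D hdim
    by_contra! hcon
    rw [inf_eq_right.2 (show D ≤ C from hcon)] at hdim
    omega
  obtain ⟨x, hxD, hx⟩ := hex D hdim
  obtain ⟨x', hxD', hx'⟩ := hex D' hdim'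
  obtain ⟨c0, hc0, h1⟩ := geo_notMem hs hC hx
  have hE : C ⊓ D = C ⊓ B.orthogonal (F ∙ x) := by
    have := nbr_unique hs hC hD hx hxD hdim
    rw [this, nbrD_inf hx]
  -- x' - a x in C
  have hc : x' - (B x' c0) • x ∈ C := by
    rw [← hC, LinearMap.BilinForm.mem_orthogonal_iff]
    intro c hc
    have h3 : c - (B x c) • c0 ∈ C ⊓ D := by
      rw [hE]
      refine ⟨C.sub_mem hc (C.smul_mem _ hc0), ?_⟩
      rw [SetLike.mem_coe, mem_orth_span]
      simp [h1]
    rw [hDD] at h3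
    have h4 := geo_iso hD' h3.2 hxD'
    simp only [map_sub, map_smul, LinearMap.sub_apply, LinearMap.smul_apply, smul_eq_mul] at h4 ⊢
    rw [hs x' c0, hs c x]
    linear_combination h4
  have ha : B x' c0 ≠ 0 := by
    intro h0
    rw [h0] at hc
    apply hx'
    simpa using hc
  have hmem : x' - (B x' c0) • x ∈ C ⊓ D := by
    rw [hE]
    refine ⟨hc, ?_⟩
    rw [SetLike.mem_coe, mem_orth_span]
    have e0 := geo_iso hC hc hc
    have e1 := geo_iso hD hxD hxD
    have e2 := geo_iso hD' hxD' hxD'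
    have e3 := hs x' x
    simp only [map_sub, map_smul, LinearMap.sub_apply, LinearMap.smul_apply, smul_eq_mul, e1, e2,
      e3] at e0 ⊢
    have : (2 * B x' c0) * B x x' = 0 := by linear_combination -e0
    have := (mul_eq_zero.1 this).resolve_left (mul_ne_zero h2 ha)
    rw [this]; ring
  have hx'D : x' ∈ D := by
    have := D.add_mem hmem.2 (D.smul_mem (B x' c0) hxD)
    simpa using this
  symm
  apply geo_le_eq hD hD'
  rw [nbr_eq hx' hxD' hdim', ← hDD]
  exact sup_le inf_le_right ((Submodule.span_singleton_le_iff_mem _ _).2 hx'D)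

end Geo
end KneserHeckeCodes
namespace KneserHeckeCodes
section Geo2
variable {F V : Type} [Field F] [Fintype F] [AddCommGroup V] [Module F V] [FiniteDimensional F V]
  {B : LinearMap.BilinForm F V}

theorem card_case1 (hs : ∀ x y, B x y = B y x) (hnd : B.Nondegenerate) (h2 : (2 : F) ≠ 0) {n : ℕ}
    (hdim : ∀ D : Submodule F V, B.orthogonal D = D → Module.finrank F D = n)
    {C U : Submodule F V} (hC : B.orthogonal C = C) (hU : U ≤ C) :
    Nat.card {D : Submodule F V // (B.orthogonal D = D ∧ Module.finrank F ↥(C ⊓ D) + 1 = n) ∧ U ≤ D}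
      * (Fintype.card F - 1) + 1 = Fintype.card F ^ (n - Module.finrank F U) := by
  rw [← hdim C hC, ← card_hyper U C hU]
  congr 2
  have hn := hdim C hC
  refine Nat.card_congr (Equiv.ofBijective (fun D => ⟨C ⊓ D.1, le_inf hU D.2.2, inf_le_left,
    D.2.1.2⟩) ⟨?_, ?_⟩)
  · rintro ⟨D, ⟨h1, h3⟩, h4⟩ ⟨D', ⟨h1', h3'⟩, h4'⟩ h
    have h5 : C ⊓ D = C ⊓ D' := congrArg Subtype.val h
    apply Subtype.ext
    refine nbr_inj hs h2 hC h1 h1' h5 ?_ ?_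
    · rw [hdim D h1, h3, hn]
    · rw [hdim D' h1', h3', hn]
  · rintro ⟨E, h1, h3, h4⟩
    obtain ⟨x, hx, hxx, hE⟩ := nbr_exists hs hnd h2 hC h3 h4
    refine ⟨⟨nbrD B C x, ⟨nbrD_sd hs hC hx hxx, ?_⟩, ?_⟩, Subtype.ext hE⟩
    · rw [hE, h4]
    · rw [← hE] at h1; exact h1.trans inf_le_right

theorem card_case2 (hs : ∀ x y, B x y = B y x) {n : ℕ}
    (hdim : ∀ D : Submodule F V, B.orthogonal D = D → Module.finrank F D = n)
    {C U : Submodule F V} (hC : B.orthogonal C = C) (hU : ¬ U ≤ C)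
    (hiso : ∀ x ∈ U, ∀ y ∈ U, B x y = 0) :
    Nat.card {D : Submodule F V // (B.orthogonal D = D ∧ Module.finrank F ↥(C ⊓ D) + 1 = n) ∧ U ≤ D}
     = Nat.card {U' : Submodule F V // (U' ≤ U ∧ Module.finrank F U' + 1 = Module.finrank F U) ∧
        U' ≤ C} := by
  obtain ⟨x, hxU, hx⟩ := Set.not_subset.1 hU
  have hx : x ∉ C := hx
  have hn := hdim C hC
  have hsub1 : ∀ D : Submodule F V,
      (B.orthogonal D = D ∧ Module.finrank F ↥(C ⊓ D) + 1 = n) ∧ U ≤ D → D = nbrD B C x := by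
    rintro D ⟨⟨h1, h3⟩, h4⟩
    exact nbr_unique hs hC h1 hx (h4 hxU) (by rw [hdim D h1, h3])
  have hsub2 : ∀ U' : Submodule F V, (U' ≤ U ∧ Module.finrank F U' + 1 = Module.finrank F U) ∧
        U' ≤ C → U' = C ⊓ U := by
    rintro U' ⟨⟨h1, h3⟩, h4⟩
    apply Submodule.eq_of_le_of_finrank_le (le_inf h4 h1)
    have : C ⊓ U < U := lt_of_le_of_ne inf_le_right (fun h => hU (by rw [← h]; exact inf_le_left))
    have := Submodule.finrank_lt_finrank_of_lt this
    omega
  -- membership equivalence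
  have hiff : ((B.orthogonal (nbrD B C x) = nbrD B C x ∧
      Module.finrank F ↥(C ⊓ nbrD B C x) + 1 = n) ∧ U ≤ nbrD B C x) ↔
      ((C ⊓ U ≤ U ∧ Module.finrank F ↥(C ⊓ U) + 1 = Module.finrank F U) ∧ C ⊓ U ≤ C) := by
    have hsd := nbrD_sd hs hC hx (hiso x hxU x hxU)
    have hfr := nbrD_finrank (B := B) hx
    constructor
    · rintro ⟨-, h4⟩
      refine ⟨⟨inf_le_right, ?_⟩, inf_le_left⟩
      have : U = (C ⊓ U) ⊔ F ∙ x := by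
        apply le_antisymm
        · intro u hu
          obtain ⟨e, he, w, hw, rfl⟩ := Submodule.mem_sup.1 (h4 hu)
          refine Submodule.add_mem_sup ⟨he.1, ?_⟩ hw
          have hwU : w ∈ U := (Submodule.span_singleton_le_iff_mem _ _).2 hxU hw
          simpa using U.sub_mem hu hwU
        · exact sup_le inf_le_right ((Submodule.span_singleton_le_iff_mem _ _).2 hxU)
      have h5 := Submodule.finrank_sup_span_singleton (p := C ⊓ U) (v := x)
        (fun h => hx (Submodule.mem_inf.1 h).1)
      rw [← this] at h5
      exact h5.symm
    · rintro ⟨⟨-, h4⟩, -⟩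
      refine ⟨⟨hsd, by rw [hfr, hdim _ hsd]⟩, ?_⟩
      rw [nbr_eq hx hxU h4]
      refine sup_le_sup (le_inf inf_le_left ?_) le_rfl
      intro y hy
      rw [mem_orth_span]
      exact hiso x hxU y hy.2
  by_cases h : ((B.orthogonal (nbrD B C x) = nbrD B C x ∧
      Module.finrank F ↥(C ⊓ nbrD B C x) + 1 = n) ∧ U ≤ nbrD B C x)
  · have h' := hiff.1 h
    trans 1
    · rw [Nat.card_eq_one_iff_unique]
      exact ⟨⟨fun a b => Subtype.ext ((hsub1 _ a.2).trans (hsub1 _ b.2).symm)⟩, ⟨⟨_, h⟩⟩⟩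
    · symm
      rw [Nat.card_eq_one_iff_unique]
      exact ⟨⟨fun a b => Subtype.ext ((hsub2 _ a.2).trans (hsub2 _ b.2).symm)⟩, ⟨⟨_, h'⟩⟩⟩
  · have h' := fun hh => h (hiff.2 hh)
    have i1 : IsEmpty {D : Submodule F V // (B.orthogonal D = D ∧
        Module.finrank F ↥(C ⊓ D) + 1 = n) ∧ U ≤ D} :=
      ⟨fun a => h (by have := a.2; rw [hsub1 _ a.2] at this; exact this)⟩
    have i2 : IsEmpty {U' : Submodule F V // (U' ≤ U ∧ Module.finrank F U' + 1 = Module.finrank F U) ∧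
        U' ≤ C} :=
      ⟨fun a => h' (by have := a.2; rw [hsub2 _ a.2] at this; exact this)⟩
    rw [Nat.card_of_isEmpty, Nat.card_of_isEmpty]

/-- the eigenvalue -/
def nuE (q : ℂ) (n m : ℕ) : ℂ := (q ^ (n - m) - q ^ m) / (q - 1)

open Classical in
theorem key_count [Fintype (Submodule F V)] (hs : ∀ x y, B x y = B y x) (hnd : B.Nondegenerate)
    (h2 : (2 : F) ≠ 0) {n : ℕ}
    (hdim : ∀ D : Submodule F V, B.orthogonal D = D → Module.finrank F D = n)
    {C U : Submodule F V} (hC : B.orthogonal C = C)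
    (hiso : ∀ x ∈ U, ∀ y ∈ U, B x y = 0) :
    (∑ D : Submodule F V with (B.orthogonal D = D ∧ Module.finrank F ↥(C ⊓ D) + 1 = n),
      (if U ≤ D then (1 : ℂ) else 0)) =
    nuE (Fintype.card F) n (Module.finrank F U) * (if U ≤ C then (1 : ℂ) else 0) +
    ∑ U' : Submodule F V with (U' ≤ U ∧ Module.finrank F U' + 1 = Module.finrank F U),
      (if U' ≤ C then (1 : ℂ) else 0) := by
  have e1 : (∑ D : Submodule F V with (B.orthogonal D = D ∧ Module.finrank F ↥(C ⊓ D) + 1 = n),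
      (if U ≤ D then (1 : ℂ) else 0)) =
      (Nat.card {D : Submodule F V // (B.orthogonal D = D ∧ Module.finrank F ↥(C ⊓ D) + 1 = n) ∧
        U ≤ D} : ℂ) := by
    rw [Finset.sum_boole, Finset.filter_filter, Nat.card_eq_fintype_card, Fintype.card_subtype]
  have e2 : (∑ U' : Submodule F V with (U' ≤ U ∧ Module.finrank F U' + 1 = Module.finrank F U),
      (if U' ≤ C then (1 : ℂ) else 0)) =
      (Nat.card {U' : Submodule F V // (U' ≤ U ∧ Module.finrank F U' + 1 = Module.finrank F U) ∧
        U' ≤ C} : ℂ) := by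
    rw [Finset.sum_boole, Finset.filter_filter, Nat.card_eq_fintype_card, Fintype.card_subtype]
  rw [e1, e2]
  by_cases hU : U ≤ C
  · have c1 := card_case1 hs hnd h2 hdim hC hU
    have c2 := card_hyper (⊥ : Submodule F V) U bot_le
    have e3 : Nat.card {U' : Submodule F V // (U' ≤ U ∧
        Module.finrank F U' + 1 = Module.finrank F U) ∧ U' ≤ C} =
        Nat.card {E : Submodule F V // ⊥ ≤ E ∧ E ≤ U ∧
          Module.finrank F E + 1 = Module.finrank F U} := by
      refine Nat.card_congr (Equiv.subtypeEquivRight fun E => ?_)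
      constructor
      · rintro ⟨⟨a, b⟩, -⟩; exact ⟨bot_le, a, b⟩
      · rintro ⟨-, a, b⟩; exact ⟨⟨a, b⟩, a.trans hU⟩
    rw [e3, if_pos hU]
    rw [finrank_bot, Nat.sub_zero] at c2
    have hq : 1 < Fintype.card F := Fintype.one_lt_card
    have hq' : (Fintype.card F : ℂ) - 1 ≠ 0 := by
      rw [sub_ne_zero]; exact_mod_cast hq.ne'
    have c1' := congrArg (Nat.cast : ℕ → ℂ) c1
    have c2' := congrArg (Nat.cast : ℕ → ℂ) c2
    push_cast [Nat.cast_sub hq.le] at c1' c2'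
    unfold nuE
    rw [← c1', ← c2']
    field_simp
    ring
  · rw [if_neg hU, card_case2 hs hdim hC hU hiso]
    ring
end Geo2
end KneserHeckeCodes
namespace KneserHeckeCodes

theorem abstract_eig {E : Type} [AddCommGroup E] [Module ℂ E] (T : E → E) (I : E → E → ℂ)
    (n : ℕ) (nu : ℕ → ℂ) (Vs : ℕ → Submodule ℂ E)
    (h0 : Vs 0 = ⊤) (hanti : ∀ k, Vs (k + 1) ≤ Vs k) (hbot : Vs (n + 1) = ⊥)
    (hT : ∀ k ≤ n, ∀ v ∈ Vs k, T v - nu k • v ∈ Vs (k + 1))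
    (hreal : ∀ k, (starRingEnd ℂ) (nu k) = nu k)
    (hinj : ∀ j ≤ n, ∀ k ≤ n, j ≠ k → nu j ≠ nu k)
    (hI1 : ∀ x y z a, I x (y - a • z) = I x y - a * I x z)
    (hI2 : ∀ x y z a, I (y - a • z) x = I y x - (starRingEnd ℂ) a * I z x)
    (hsa : ∀ x y, I x (T y) = I (T x) y)
    (hpd : ∀ x, I x x = 0 → x = 0) (m : ℕ) (hm : m ≤ n) (w : E) :
    ((∀ v ∈ Vs (m + 1), I w v = 0) ∧ w ∈ Vs m) ↔ T w = nu m • w := by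
  have hI0 : ∀ x, I x 0 = 0 := by
    intro x
    have := hI1 x 0 0 1
    simpa using this
  have hI0' : ∀ x, I 0 x = 0 := by
    intro x
    have := hI2 x 0 0 1
    simpa using this
  constructor
  · rintro ⟨hW, hV⟩
    have hz := hT m hm w hV
    set z := T w - nu m • w with hzdef
    have hz2 := hT m hm z (hanti m hz)
    have : I z z = 0 := by
      rw [hzdef, hI2, hreal, ← hsa, ← hI1, ← hzdef]
      exact hW _ hz2
    exact sub_eq_zero.1 (hpd z this)
  · intro hw
    constructor
    · have key : ∀ d j, j + d = n → m ≤ j → ∀ v ∈ Vs (j + 1), I w v = 0 := by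
        intro d
        induction d with
        | zero =>
          intro j hj _ v hv
          rw [show j = n by omega, hbot, Submodule.mem_bot] at hv
          rw [hv, hI0]
        | succ d ih =>
          intro j hj hmj v hv
          have h1 := ih (j + 1) (by omega) (by omega) _ (hT (j + 1) (by omega) v hv)
          rw [hI1, hsa, ← hreal (j + 1), ← hI2, hw] at h1
          have h3 : (nu m - nu (j + 1)) * I w v = 0 := by
            have e1 := hI2 v 0 w (-(nu m - nu (j+1)))
            have e2 : nu m • w - nu (j+1) • w = 0 - (-(nu m - nu (j+1))) • w := by
              rw [neg_smul, sub_smul]; abel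
            rw [e2, e1, hI0'] at h1
            simp only [map_neg, map_sub, hreal] at h1
            linear_combination h1
          exact (mul_eq_zero.1 h3).resolve_left
            (sub_ne_zero.2 (hinj m hm (j + 1) (by omega) (by omega)))
      exact key (n - m) m (by omega) le_rfl
    · have key : ∀ j ≤ m, w ∈ Vs j := by
        intro j
        induction j with
        | zero => intro _; rw [h0]; trivial
        | succ j ih =>
          intro hj
          have h1 := hT j (by omega) w (ih (by omega))
          rw [hw, ← sub_smul] at h1
          exact ((Vs (j+1)).smul_mem_iff
            (sub_ne_zero.2 (hinj m hm j (by omega) (by omega)))).1 h1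
      exact key m le_rfl

theorem nuE_inj {q : ℕ} (hq : 1 < q) {n : ℕ} :
    ∀ j ≤ n, ∀ k ≤ n, j ≠ k → nuE q n j ≠ nuE q n k := by
  have main : ∀ j k, j < k → k ≤ n → nuE q n j ≠ nuE q n k := by
    intro j k hjk hk h
    unfold nuE at h
    have hq' : (q : ℂ) - 1 ≠ 0 := by
      rw [sub_ne_zero]; exact_mod_cast hq.ne'
    rw [div_left_inj' hq'] at h
    have h2 : q ^ (n - j) + q ^ k = q ^ (n - k) + q ^ j := by
      have : (q : ℂ) ^ (n - j) + (q : ℂ) ^ k = (q : ℂ) ^ (n - k) + (q : ℂ) ^ j := by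
        linear_combination h
      exact_mod_cast this
    have h3 : q ^ j < q ^ k := Nat.pow_lt_pow_right hq hjk
    have h4 : q ^ (n - k) ≤ q ^ (n - j) := Nat.pow_le_pow_right (by omega) (by omega)
    omega
  intro j hj k hk hne
  rcases lt_or_gt_of_ne hne with h | h
  · exact main j k h hk
  · exact (main k j h hj).symm

theorem nuE_real (q n m : ℕ) : (starRingEnd ℂ) (nuE q n m) = nuE q n m := by
  unfold nuE
  simp

set_option linter.unusedSectionVars false
section Codes
variable {F : Type} [Field F] [Fintype F] {N : ℕ}

theorem mem_permCode {π : Equiv.Perm (Fin N)} {C : Submodule F (Fin N → F)} {x : Fin N → F} :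
    x ∈ permCode π C ↔ (fun i => x (π⁻¹ i)) ∈ C := by
  unfold permCode
  rw [Submodule.mem_map]
  constructor
  · rintro ⟨y, hy, rfl⟩
    convert hy using 1
    ext i
    simp [LinearMap.funLeft]
  · intro h
    refine ⟨_, h, ?_⟩
    ext i
    simp [LinearMap.funLeft]

theorem permCode_mul (π σ : Equiv.Perm (Fin N)) (C : Submodule F (Fin N → F)) :
    permCode π (permCode σ C) = permCode (σ * π) C := by
  ext x
  simp [mem_permCode, mul_inv_rev]

theorem permCode_one (C : Submodule F (Fin N → F)) : permCode 1 C = C := by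
  ext x
  simp [mem_permCode]

theorem permCode_inj (π : Equiv.Perm (Fin N)) : Function.Injective (permCode (F := F) π) := by
  intro C D h
  have := congrArg (permCode π⁻¹) h
  simpa [permCode_mul, permCode_one] using this

theorem permCode_inv_eq {π : Equiv.Perm (Fin N)} {C D : Submodule F (Fin N → F)} :
    permCode π C = D ↔ C = permCode π⁻¹ D := by
  constructor
  · rintro rfl; simp [permCode_mul, permCode_one]
  · rintro rfl; simp [permCode_mul, permCode_one]

theorem permCode_inf (π : Equiv.Perm (Fin N)) (C D : Submodule F (Fin N → F)) :
    permCode π (C ⊓ D) = permCode π C ⊓ permCode π D := by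
  ext x
  simp [mem_permCode]

theorem permCode_finrank (π : Equiv.Perm (Fin N)) (C : Submodule F (Fin N → F)) :
    Module.finrank F (permCode π C) = Module.finrank F C := by
  unfold permCode
  refine (Submodule.equivMapOfInjective _ ?_ _).finrank_eq.symm
  exact LinearMap.funLeft_injective_of_surjective F F π π.surjective

theorem permCode_nbr (π : Equiv.Perm (Fin N)) (C D : Submodule F (Fin N → F)) :
    Module.finrank F ↥(permCode π C ⊓ permCode π D) = Module.finrank F ↥(C ⊓ D) := by
  rw [← permCode_inf, permCode_finrank]

theorem permCode_sd (π : Equiv.Perm (Fin N)) {C : Submodule F (Fin N → F)}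
    (hC : C = dualCode (id : F → F) C) :
    permCode π C = dualCode (id : F → F) (permCode π C) := by
  ext x
  rw [mem_permCode]
  conv_lhs => rw [hC]
  change (∀ c ∈ C, ∑ i, x (π⁻¹ i) * id (c i) = 0) ↔ ∀ c ∈ permCode π C, ∑ i, x i * id (c i) = 0
  constructor
  · intro h c hc
    rw [mem_permCode] at hc
    rw [← h _ hc, ← Equiv.sum_comp π⁻¹ (fun i => x i * id (c i))]
  · intro h c hc
    have : (fun i => c (π i)) ∈ permCode π C := by
      rw [mem_permCode]; simpa using hc
    rw [← h _ this, ← Equiv.sum_comp π⁻¹ (fun i => x i * id (c (π i)))]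
    simp

theorem cls_eq_iff {𝓕 : Set (Submodule F (Fin N → F))} (C D : 𝓕) :
    clsOf C = clsOf D ↔ ∃ π, permCode π C.1 = D.1 := by
  unfold clsOf
  have heq : Equivalence (fun C D : 𝓕 => equivCode C.1 D.1) := by
    constructor
    · exact fun C => ⟨1, permCode_one _⟩
    · rintro C D ⟨π, h⟩
      exact ⟨π⁻¹, (by rw [← h, permCode_mul, mul_inv_cancel, permCode_one])⟩
    · rintro C D E ⟨π, h⟩ ⟨σ, h'⟩
      exact ⟨π * σ, (by rw [← permCode_mul, h, h'])⟩
  rw [Quot.eq, heq.eqvGen_iff]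
  rfl

theorem cls_rep {𝓕 : Set (Submodule F (Fin N → F))} (b : ClassesB 𝓕) : clsOf (repB b) = b :=
  Quot.out_eq b

theorem autCard_pos (C : Submodule F (Fin N → F)) : 0 < autCard C := by
  unfold autCard
  have : Nonempty {π : Equiv.Perm (Fin N) // permCode π C = C} := ⟨⟨1, permCode_one _⟩⟩
  exact Nat.card_pos

/-- pairing of `v` with the symmetrisation of `f` -/
def Pf (𝓕 : Set (Submodule F (Fin N → F))) [Fintype (ClassesB 𝓕)] (v : ClassesB 𝓕 → ℂ)
    (f : Submodule F (Fin N → F) → ℂ) : ℂ :=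
  ∑ b, v b * ∑ π : Equiv.Perm (Fin N), f (permCode π (repB b).1)

open Classical in
/-- indicator of containing `U` -/
def fU (U D : Submodule F (Fin N → F)) : ℂ := if U ≤ D then 1 else 0

theorem heckeT_apply (𝓕 : Set (Submodule F (Fin N → F))) [Fintype (ClassesB 𝓕)] (n k : ℕ)
    (v : ClassesB 𝓕 → ℂ) (b' : ClassesB 𝓕) : heckeT 𝓕 n k v b' = ∑ b : ClassesB 𝓕, v b *
    (Nat.card {D : 𝓕 // Module.finrank F ↥((repB b).1 ⊓ D.1) + k = n ∧ clsOf D = b'} : ℂ) := by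
  unfold heckeT
  congr!

theorem aXc_apply {m : ℕ} (𝓕 : Set (Submodule F (Fin N → F))) [Fintype (ClassesB 𝓕)]
    (X : (Fin m → F) → ℕ) (v : ClassesB 𝓕 → ℂ) :
    aXc 𝓕 X v = ∑ b : ClassesB 𝓕, v b * (aX X (repB b).1 : ℂ) := by
  unfold aXc
  congr!

theorem innerV_apply (𝓕 : Set (Submodule F (Fin N → F))) [Fintype (ClassesB 𝓕)]
    (v w : ClassesB 𝓕 → ℂ) : innerV 𝓕 v w =
    ∑ b : ClassesB 𝓕, (starRingEnd ℂ) (v b) * w b * (autCard (repB b).1 : ℂ) := by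
  unfold innerV
  congr!

theorem mon_eq_iff {m : ℕ} (c c' : Fin m → (Fin N → F)) :
    mon c = mon c' ↔ ∃ π : Equiv.Perm (Fin N), ∀ j i, c' j i = c j (π i) := by
  constructor
  · intro h
    have e : ∀ v : Fin m → F, Nonempty ({i : Fin N // (fun j => c' j i) = v} ≃
        {i : Fin N // (fun j => c j i) = v}) := by
      intro v
      have h1 := congrFun h v
      unfold mon at h1
      have h2 := Finite.card_eq.1 h1
      refine ⟨((Equiv.subtypeEquivRight fun i => ?_).trans h2.some.symm).trans
        (Equiv.subtypeEquivRight fun i => ?_)⟩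
      · exact funext_iff
      · exact funext_iff.symm
    let e' := fun v => (e v).some
    let π : Fin N ≃ Fin N := ((Equiv.sigmaFiberEquiv (fun i => (fun j => c' j i))).symm.trans
      (Equiv.sigmaCongrRight e')).trans (Equiv.sigmaFiberEquiv (fun i => (fun j => c j i)))
    refine ⟨π, fun j i => ?_⟩
    have : (fun j => c j (π i)) = (fun j => c' j i) := (e' (fun j => c' j i) ⟨i, rfl⟩).2
    exact (congrFun this j).symm
  · rintro ⟨π, h⟩
    ext v
    unfold mon
    refine Nat.card_congr (Equiv.subtypeEquiv π.symm ?_)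
    intro i
    simp [h]

theorem card_orbit {m : ℕ} (c : Fin m → (Fin N → F)) (C : Submodule F (Fin N → F)) :
    Nat.card {π : Equiv.Perm (Fin N) // ∀ j, c j ∈ permCode π C} =
      aX (mon c) C * Nat.card {π : Equiv.Perm (Fin N) // ∀ j i, c j (π i) = c j i} := by
  unfold aX
  rw [← Nat.card_prod]
  have hch : ∀ c' : {c' : Fin m → (Fin N → F) // (∀ j, c' j ∈ C) ∧ mon c' = mon c},
      ∃ π : Equiv.Perm (Fin N), ∀ j i, c'.1 j i = c j (π i) := fun c' =>
    (mon_eq_iff c c'.1).1 c'.2.2.symm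
  choose p hp using hch
  symm
  refine Nat.card_congr (Equiv.ofBijective (fun cs => ⟨(cs.2.1 * p cs.1)⁻¹, ?_⟩) ⟨?_, ?_⟩)
  · intro j
    rw [mem_permCode]
    convert cs.1.2.1 j using 1
    ext i
    simp [hp, cs.2.2]
  · rintro ⟨c1, s1⟩ ⟨c2, s2⟩ h
    have h1 : s1.1 * p c1 = s2.1 * p c2 := inv_injective (congrArg Subtype.val h)
    have h3 : c1 = c2 := by
      apply Subtype.ext
      ext j i
      rw [hp, hp, ← s1.2, ← s2.2 j (p c2 i)]
      exact congrArg (c j) (DFunLike.congr_fun h1 i)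
    subst h3
    have : s1 = s2 := Subtype.ext (mul_right_cancel h1)
    rw [this]
  · rintro ⟨π, hπ⟩
    let c' : {c' : Fin m → (Fin N → F) // (∀ j, c' j ∈ C) ∧ mon c' = mon c} :=
      ⟨fun j i => c j (π⁻¹ i), fun j => mem_permCode.1 (hπ j),
        ((mon_eq_iff _ _).2 ⟨π⁻¹, fun j i => rfl⟩).symm⟩
    refine ⟨⟨c', ⟨π⁻¹ * (p c')⁻¹, ?_⟩⟩, ?_⟩
    · intro j i
      have := hp c' j ((p c')⁻¹ i)
      rw [← Equiv.Perm.mul_apply, mul_inv_cancel] at this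
      exact this
    · apply Subtype.ext
      simp

open Classical in
theorem sum_fU_span {m : ℕ} (c : Fin m → (Fin N → F)) (C : Submodule F (Fin N → F)) :
    ∑ π : Equiv.Perm (Fin N), fU (Submodule.span F (Set.range c)) (permCode π C) =
    (aX (mon c) C : ℂ) * Nat.card {π : Equiv.Perm (Fin N) // ∀ j i, c j (π i) = c j i} := by
  have := card_orbit c C
  rw [← Nat.cast_mul, ← this]
  unfold fU
  rw [Finset.sum_boole, Nat.card_eq_fintype_card, Fintype.card_subtype]
  congr 3
  ext π
  rw [Submodule.span_le, Set.range_subset_iff]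
  rfl

theorem Pf_span (𝓕 : Set (Submodule F (Fin N → F))) [Fintype (ClassesB 𝓕)] (v : ClassesB 𝓕 → ℂ)
    {m : ℕ} (c : Fin m → (Fin N → F)) :
    Pf 𝓕 v (fU (Submodule.span F (Set.range c))) = aXc 𝓕 (mon c) v *
      Nat.card {π : Equiv.Perm (Fin N) // ∀ j i, c j (π i) = c j i} := by
  unfold Pf
  rw [aXc_apply, Finset.sum_mul]
  refine Finset.sum_congr rfl fun b _ => ?_
  rw [sum_fU_span, mul_assoc]

theorem mon_mem {m : ℕ} (c : Fin m → (Fin N → F)) : mon c ∈ MmSet F m N := by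
  classical
  change ∑ v, mon c v = N
  have : ∀ v, mon c v = ∑ i : Fin N, if (fun j => c j i) = v then 1 else 0 := by
    intro v
    unfold mon
    rw [Finset.sum_boole, Nat.card_eq_fintype_card, Fintype.card_subtype]
    simp [funext_iff]
  simp_rw [this]
  rw [Finset.sum_comm]
  simp

theorem exists_span {m : ℕ} (U : Submodule F (Fin N → F)) (hU : Module.finrank F U ≤ m) :
    ∃ c : Fin m → (Fin N → F), Submodule.span F (Set.range c) = U := by
  let bs := Module.finBasis F U
  refine ⟨fun j => if h : j.1 < Module.finrank F U then (bs ⟨j.1, h⟩ : Fin N → F) else 0, ?_⟩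
  apply le_antisymm
  · rw [Submodule.span_le]
    rintro _ ⟨j, rfl⟩
    dsimp only
    split_ifs with h
    · exact (bs ⟨j.1, h⟩).2
    · exact U.zero_mem
  · have h1 : U = (Submodule.span F (Set.range bs)).map U.subtype := by
      rw [bs.span_eq, Submodule.map_top, Submodule.range_subtype]
    conv_lhs => rw [h1]
    rw [Submodule.map_span, Submodule.span_le]
    rintro _ ⟨_, ⟨i, rfl⟩, rfl⟩
    apply Submodule.subset_span
    refine ⟨⟨i.1, lt_of_lt_of_le i.2 hU⟩, ?_⟩
    simp

theorem mem_VmSet_iff (𝓕 : Set (Submodule F (Fin N → F))) [Fintype (ClassesB 𝓕)]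
    (v : ClassesB 𝓕 → ℂ) (m : ℕ) :
    v ∈ VmSet 𝓕 m ↔ ∀ U : Submodule F (Fin N → F), Module.finrank F U < m + 1 →
      Pf 𝓕 v (fU U) = 0 := by
  constructor
  · intro h U hU
    obtain ⟨c, rfl⟩ := exists_span U (Nat.lt_succ_iff.1 hU)
    rw [Pf_span, h _ (mon_mem c), zero_mul]
  · intro h X hX
    by_cases hc : ∃ c : Fin m → (Fin N → F), mon c = X
    · obtain ⟨c, rfl⟩ := hc
      have h1 := h (Submodule.span F (Set.range c)) (by
        have := finrank_range_le_card (R := F) c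
        rw [Fintype.card_fin] at this
        exact Nat.lt_succ_iff.2 this)
      rw [Pf_span] at h1
      refine (mul_eq_zero.1 h1).resolve_right ?_
      have : Nonempty {π : Equiv.Perm (Fin N) // ∀ j i, c j (π i) = c j i} :=
        ⟨⟨1, fun _ _ => rfl⟩⟩
      exact_mod_cast Nat.card_pos.ne'
    · rw [aXc_apply]
      refine Finset.sum_eq_zero fun b _ => ?_
      have : IsEmpty {c : Fin m → (Fin N → F) // (∀ j, c j ∈ (repB b).1) ∧ mon c = X} :=
        ⟨fun c => hc ⟨c.1, c.2.2⟩⟩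
      unfold aX
      rw [Nat.card_of_isEmpty]
      simp

theorem card_fib {𝓕 : Set (Submodule F (Fin N → F))} (b : ClassesB 𝓕) (D : 𝓕) (h : clsOf D = b) :
    Nat.card {π : Equiv.Perm (Fin N) // permCode π (repB b).1 = D.1} = autCard (repB b).1 := by
  obtain ⟨σ, hσ⟩ := (cls_eq_iff (repB b) D).1 (by rw [cls_rep, h])
  unfold autCard
  refine Nat.card_congr (Equiv.subtypeEquiv (Equiv.mulRight σ⁻¹) ?_)
  intro π
  simp only [Equiv.coe_mulRight]
  rw [← permCode_mul, permCode_inv_eq (π := σ⁻¹), inv_inv, hσ]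

end Codes
end KneserHeckeCodes
namespace KneserHeckeCodes
set_option linter.unusedSectionVars false
section Codes2
variable {F : Type} [Field F] [Fintype F] {N : ℕ}

theorem cnt_aut {𝓕 : Set (Submodule F (Fin N → F))} (hcl : ∀ π, ∀ C ∈ 𝓕, permCode π C ∈ 𝓕) (n : ℕ)
    (b b' : ClassesB 𝓕) :
    Nat.card {D : 𝓕 // Module.finrank F ↥((repB b).1 ⊓ D.1) + 1 = n ∧ clsOf D = b'} *
      autCard (repB b').1 =
    Nat.card {π : Equiv.Perm (Fin N) //
      Module.finrank F ↥((repB b).1 ⊓ permCode π (repB b').1) + 1 = n} := by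
  let g : {π : Equiv.Perm (Fin N) //
      Module.finrank F ↥((repB b).1 ⊓ permCode π (repB b').1) + 1 = n} →
      {D : 𝓕 // Module.finrank F ↥((repB b).1 ⊓ D.1) + 1 = n ∧ clsOf D = b'} := fun π =>
    ⟨⟨permCode π.1 (repB b').1, hcl _ _ (repB b').2⟩, π.2, by
      refine Eq.trans ?_ (cls_rep b')
      exact ((cls_eq_iff _ _).2 ⟨π.1, rfl⟩).symm⟩
  rw [← Nat.card_congr (Equiv.sigmaFiberEquiv g)]
  letI := Fintype.ofFinite {D : 𝓕 // Module.finrank F ↥((repB b).1 ⊓ D.1) + 1 = n ∧ clsOf D = b'}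
  rw [Nat.card_sigma]
  rw [Finset.sum_congr rfl (g := fun _ => autCard (repB b').1)]
  · simp
  · intro D _
    rw [← card_fib b' D.1 D.2.2]
    refine Nat.card_congr ⟨fun x => ⟨x.1.1, congrArg (fun D => D.1.1) x.2⟩,
      fun π => ⟨⟨π.1, by rw [π.2]; exact D.2.1⟩, Subtype.ext (Subtype.ext π.2)⟩, ?_, ?_⟩
    · intro x; rfl
    · intro x; rfl

theorem cnt_symm {𝓕 : Set (Submodule F (Fin N → F))} (n : ℕ)
    (b b' : ClassesB 𝓕) :
    Nat.card {π : Equiv.Perm (Fin N) //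
      Module.finrank F ↥((repB b).1 ⊓ permCode π (repB b').1) + 1 = n} =
    Nat.card {π : Equiv.Perm (Fin N) //
      Module.finrank F ↥((repB b').1 ⊓ permCode π (repB b).1) + 1 = n} := by
  refine Nat.card_congr (Equiv.subtypeEquiv (Equiv.inv _) ?_)
  intro π
  rw [← permCode_nbr π⁻¹, permCode_mul, mul_inv_cancel, permCode_one, inf_comm]
  rfl

theorem hecke_selfadj {𝓕 : Set (Submodule F (Fin N → F))} (hcl : ∀ π, ∀ C ∈ 𝓕, permCode π C ∈ 𝓕)
    (n : ℕ) (x y : ClassesB 𝓕 → ℂ) :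
    innerV 𝓕 x (heckeT 𝓕 n 1 y) = innerV 𝓕 (heckeT 𝓕 n 1 x) y := by
  letI : Fintype (ClassesB 𝓕) := Fintype.ofFinite _
  rw [innerV_apply, innerV_apply]
  simp_rw [heckeT_apply, map_sum, Finset.mul_sum, Finset.sum_mul]
  rw [Finset.sum_comm]
  refine Finset.sum_congr rfl fun b _ => Finset.sum_congr rfl fun b' _ => ?_
  have h1 := congrArg (Nat.cast : ℕ → ℂ) (cnt_aut hcl n b b')
  have h2 := congrArg (Nat.cast : ℕ → ℂ) (cnt_aut hcl n b' b)
  rw [cnt_symm n b' b, ← h1] at h2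
  push_cast at h2
  rw [map_mul, Complex.conj_natCast]
  linear_combination (-(starRingEnd ℂ) (x b') * y b) * h2

theorem inner_pd {𝓕 : Set (Submodule F (Fin N → F))} (x : ClassesB 𝓕 → ℂ)
    (h : innerV 𝓕 x x = 0) : x = 0 := by
  letI : Fintype (ClassesB 𝓕) := Fintype.ofFinite _
  rw [innerV_apply] at h
  have h1 : ∀ b, (starRingEnd ℂ) (x b) * x b * (autCard (repB b).1 : ℂ) =
      ((Complex.normSq (x b) * autCard (repB b).1 : ℝ) : ℂ) := by
    intro b
    rw [mul_comm ((starRingEnd ℂ) (x b)), Complex.mul_conj]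
    push_cast
    rfl
  simp_rw [h1] at h
  rw [← Complex.ofReal_sum, Complex.ofReal_eq_zero, Finset.sum_eq_zero_iff_of_nonneg
    (fun b _ => mul_nonneg (Complex.normSq_nonneg _) (Nat.cast_nonneg _))] at h
  ext b
  have h2 := h b (Finset.mem_univ b)
  have h3 : (autCard (repB b).1 : ℝ) ≠ 0 := by exact_mod_cast (autCard_pos _).ne'
  exact Complex.normSq_eq_zero.1 ((mul_eq_zero.1 h2).resolve_right h3)

theorem sum_perm_cls {𝓕 : Set (Submodule F (Fin N → F))} (D : 𝓕)
    (f : Submodule F (Fin N → F) → ℂ) :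
    ∑ π : Equiv.Perm (Fin N), f (permCode π (repB (clsOf D)).1) =
    ∑ π : Equiv.Perm (Fin N), f (permCode π D.1) := by
  obtain ⟨σ, hσ⟩ := (cls_eq_iff (repB (clsOf D)) D).1 (cls_rep _)
  rw [← hσ]
  simp_rw [permCode_mul]
  exact (Equiv.sum_comp (Equiv.mulLeft σ) (fun π => f (permCode π (repB (clsOf D)).1))).symm

open Classical in
theorem Pf_hecke {𝓕 : Set (Submodule F (Fin N → F))} [Fintype (ClassesB 𝓕)]
    [Fintype (Submodule F (Fin N → F))] (hcl : ∀ π, ∀ C ∈ 𝓕, permCode π C ∈ 𝓕)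
    (n : ℕ) (v : ClassesB 𝓕 → ℂ) (f : Submodule F (Fin N → F) → ℂ) :
    Pf 𝓕 (heckeT 𝓕 n 1 v) f = Pf 𝓕 v (fun C =>
      ∑ D : Submodule F (Fin N → F) with (D ∈ 𝓕 ∧ Module.finrank F ↥(C ⊓ D) + 1 = n), f D) := by
  unfold Pf
  simp_rw [heckeT_apply, Finset.sum_mul]
  rw [Finset.sum_comm]
  refine Finset.sum_congr rfl fun b _ => ?_
  simp_rw [mul_assoc]
  rw [← Finset.mul_sum]
  congr 1
  have h1 : ∀ b' : ClassesB 𝓕, (Nat.card {D : 𝓕 // Module.finrank F ↥((repB b).1 ⊓ D.1) + 1 = n ∧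
      clsOf D = b'} : ℂ) = ∑ D : 𝓕, if Module.finrank F ↥((repB b).1 ⊓ D.1) + 1 = n then
        (if clsOf D = b' then (1 : ℂ) else 0) else 0 := by
    intro b'
    simp_rw [← ite_and]
    rw [Finset.sum_boole, Nat.card_eq_fintype_card, Fintype.card_subtype]
  simp_rw [h1, Finset.sum_mul]
  rw [Finset.sum_comm]
  have h2 : ∀ D : 𝓕, (∑ b' : ClassesB 𝓕, (if Module.finrank F ↥((repB b).1 ⊓ D.1) + 1 = n then
        (if clsOf D = b' then (1 : ℂ) else 0) else 0) *
        ∑ π : Equiv.Perm (Fin N), f (permCode π (repB b').1)) =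
      ∑ π : Equiv.Perm (Fin N), if Module.finrank F ↥((repB b).1 ⊓ D.1) + 1 = n then
        f (permCode π D.1) else 0 := by
    intro D
    split_ifs with h
    · rw [← sum_perm_cls D f]
      simp
    · simp
  simp_rw [h2]
  rw [Finset.sum_comm]
  refine Finset.sum_congr rfl fun π _ => ?_
  rw [← Finset.sum_filter]
  refine Finset.sum_bij (fun D _ => permCode π D.1) ?_ ?_ ?_ ?_
  · intro D hD
    simp only [Finset.mem_filter, Finset.mem_univ, true_and] at hD ⊢
    exact ⟨hcl _ _ D.2, by rw [permCode_nbr]; exact hD⟩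
  · intro D _ D' _ h
    exact Subtype.ext (permCode_inj π h)
  · intro D hD
    simp only [Finset.mem_filter, Finset.mem_univ, true_and] at hD
    refine ⟨⟨permCode π⁻¹ D, hcl _ _ hD.1⟩, ?_, ?_⟩
    · simp only [Finset.mem_filter, Finset.mem_univ, true_and]
      refine Eq.trans ?_ hD.2
      rw [← permCode_nbr π, permCode_mul, inv_mul_cancel, permCode_one]
    · simp only [permCode_mul, inv_mul_cancel, permCode_one]
  · intro D _; rfl

theorem Pf_sub_smul {𝓕 : Set (Submodule F (Fin N → F))} [Fintype (ClassesB 𝓕)]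
    (v w : ClassesB 𝓕 → ℂ) (a : ℂ) (f : Submodule F (Fin N → F) → ℂ) :
    Pf 𝓕 (v - a • w) f = Pf 𝓕 v f - a * Pf 𝓕 w f := by
  unfold Pf
  rw [Finset.mul_sum, ← Finset.sum_sub_distrib]
  refine Finset.sum_congr rfl fun b _ => ?_
  simp only [Pi.sub_apply, Pi.smul_apply, smul_eq_mul]
  ring

/-- `V_{k-1}` as a submodule -/
def VsSub (𝓕 : Set (Submodule F (Fin N → F))) [Fintype (ClassesB 𝓕)] (k : ℕ) :
    Submodule ℂ (ClassesB 𝓕 → ℂ) where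
  carrier := {v | ∀ U : Submodule F (Fin N → F), Module.finrank F U < k → Pf 𝓕 v (fU U) = 0}
  add_mem' := by
    intro a b ha hb U hU
    have h := Pf_sub_smul a b (-1) (fU U)
    rw [ha U hU, hb U hU] at h
    simpa using h
  zero_mem' := by
    intro U _
    simp [Pf]
  smul_mem' := by
    intro c x hx U hU
    have h := Pf_sub_smul 0 x (-c) (fU U)
    rw [hx U hU] at h
    have h0 : Pf 𝓕 0 (fU U) = 0 := by simp [Pf]
    rw [h0] at h
    simpa using h

theorem mem_VsSub {𝓕 : Set (Submodule F (Fin N → F))} [Fintype (ClassesB 𝓕)] {k : ℕ}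
    {v : ClassesB 𝓕 → ℂ} : v ∈ VsSub 𝓕 k ↔
    ∀ U : Submodule F (Fin N → F), Module.finrank F U < k → Pf 𝓕 v (fU U) = 0 := Iff.rfl

theorem VmPred_eq (𝓕 : Set (Submodule F (Fin N → F))) [Fintype (ClassesB 𝓕)] (k : ℕ)
    (v : ClassesB 𝓕 → ℂ) : v ∈ VmPred 𝓕 k ↔ v ∈ VsSub 𝓕 k := by
  cases k with
  | zero => simp [VmPred, mem_VsSub]
  | succ k => exact (mem_VmSet_iff 𝓕 v k)

/-- the standard form -/
def stdB (F : Type) [Field F] (N : ℕ) : LinearMap.BilinForm F (Fin N → F) := dotProductBilin F F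

theorem stdB_apply (x y : Fin N → F) : stdB F N x y = ∑ i, x i * y i := rfl

theorem stdB_symm (x y : Fin N → F) : stdB F N x y = stdB F N y x := by
  simp only [stdB_apply]
  exact Finset.sum_congr rfl fun i _ => mul_comm _ _

theorem stdB_nd : (stdB F N).Nondegenerate := by
  have h : ∀ x : Fin N → F, (∀ y, stdB F N x y = 0) → x = 0 := by
    intro x hx
    ext i
    have := hx (Pi.single i 1)
    rw [stdB_apply] at this
    simpa [Pi.single_apply] using this
  refine ⟨h, fun y hy => h y fun x => ?_⟩
  rw [stdB_symm]; exact hy x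

theorem sd_iff (C : Submodule F (Fin N → F)) :
    C = dualCode (id : F → F) C ↔ (stdB F N).orthogonal C = C := by
  have : dualCode (id : F → F) C = (stdB F N).orthogonal C := by
    ext x
    rw [LinearMap.BilinForm.mem_orthogonal_iff]
    change (∀ c ∈ C, ∑ i, x i * id (c i) = 0) ↔ _
    refine forall₂_congr fun c _ => ?_
    rw [stdB_symm]
    rfl
  rw [this, eq_comm]

theorem sd_finrank {n : ℕ} (C : Submodule F (Fin (2 * n) → F))
    (hC : (stdB F (2 * n)).orthogonal C = C) : Module.finrank F C = n := by
  have h := LinearMap.BilinForm.finrank_orthogonal (stdB_nd (F := F) (N := 2 * n)) C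
  have h2 := Submodule.finrank_le C
  rw [hC] at h
  rw [Module.finrank_fin_fun] at h h2
  omega

theorem two_ne (hq : Odd (Fintype.card F)) : (2 : F) ≠ 0 := by
  apply Ring.two_ne_zero
  intro h
  exact (Nat.not_even_iff_odd.2 hq) (Nat.even_iff.2 (FiniteField.even_card_of_char_two h))

theorem hecke_step {n : ℕ} (hq : Odd (Fintype.card F))
    {𝓕 : Set (Submodule F (Fin (2 * n) → F))}
    (h𝓕 : 𝓕 = {C : Submodule F (Fin (2 * n) → F) | C = dualCode (id : F → F) C})
    [Fintype (ClassesB 𝓕)] (k : ℕ) (v : ClassesB 𝓕 → ℂ) (hv : v ∈ VsSub 𝓕 k) :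
    heckeT 𝓕 n 1 v - nuE (Fintype.card F) n k • v ∈ VsSub 𝓕 (k + 1) := by
  classical
  letI : Fintype (Submodule F (Fin (2 * n) → F)) := Fintype.ofFinite _
  have hsd : ∀ C, C ∈ 𝓕 ↔ (stdB F (2 * n)).orthogonal C = C := by
    intro C; rw [h𝓕]; exact sd_iff C
  have hcl : ∀ π, ∀ C ∈ 𝓕, permCode π C ∈ 𝓕 := by
    intro π C hC
    rw [h𝓕] at hC ⊢
    exact permCode_sd π hC
  intro U hU
  rw [Pf_sub_smul, Pf_hecke hcl]
  by_cases hiso : ∀ x ∈ U, ∀ y ∈ U, stdB F (2 * n) x y = 0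
  · have h1 : ∀ b : ClassesB 𝓕, ∀ π, (∑ D : Submodule F (Fin (2 * n) → F) with
        (D ∈ 𝓕 ∧ Module.finrank F ↥(permCode π (repB b).1 ⊓ D) + 1 = n), fU U D) =
        nuE (Fintype.card F) n (Module.finrank F U) * fU U (permCode π (repB b).1) +
        ∑ U' : Submodule F (Fin (2 * n) → F) with
          (U' ≤ U ∧ Module.finrank F U' + 1 = Module.finrank F U),
          fU U' (permCode π (repB b).1) := by
      intro b π
      have := key_count (B := stdB F (2 * n)) stdB_symm stdB_nd (two_ne hq) sd_finrank
        ((hsd _).1 (hcl π _ (repB b).2)) hiso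
      unfold fU
      rw [← this]
      simp_rw [hsd]
    have h2 : Pf 𝓕 v (fun C => ∑ D : Submodule F (Fin (2 * n) → F) with
        (D ∈ 𝓕 ∧ Module.finrank F ↥(C ⊓ D) + 1 = n), fU U D) =
        nuE (Fintype.card F) n (Module.finrank F U) * Pf 𝓕 v (fU U) +
        ∑ U' : Submodule F (Fin (2 * n) → F) with
          (U' ≤ U ∧ Module.finrank F U' + 1 = Module.finrank F U), Pf 𝓕 v (fU U') := by
      unfold Pf
      simp_rw [h1]
      rw [Finset.sum_comm, Finset.mul_sum, ← Finset.sum_add_distrib]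
      refine Finset.sum_congr rfl fun b _ => ?_
      rw [Finset.sum_add_distrib, ← Finset.mul_sum, Finset.sum_comm, mul_add, ← Finset.mul_sum]
      ring
    rw [h2, Finset.sum_eq_zero, add_zero]
    · rcases Nat.lt_succ_iff_lt_or_eq.1 hU with h | h
      · rw [hv U h]; ring
      · rw [h]; ring
    · intro U' hU'
      simp only [Finset.mem_filter, Finset.mem_univ, true_and] at hU'
      exact hv U' (by omega)
  · have h0 : ∀ D ∈ 𝓕, fU U D = 0 := by
      intro D hD
      unfold fU
      rw [if_neg]
      intro hle
      exact hiso fun x hx y hy => geo_iso ((hsd D).1 hD) (hle hx) (hle hy)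
    have e1 : Pf 𝓕 v (fU U) = 0 := by
      unfold Pf
      refine Finset.sum_eq_zero fun b _ => ?_
      rw [Finset.sum_eq_zero, mul_zero]
      exact fun π _ => h0 _ (hcl _ _ (repB b).2)
    rw [e1, mul_zero, sub_zero]
    unfold Pf
    refine Finset.sum_eq_zero fun b _ => ?_
    rw [Finset.sum_eq_zero, mul_zero]
    intro π _
    refine Finset.sum_eq_zero fun D hD => ?_
    simp only [Finset.mem_filter, Finset.mem_univ, true_and] at hD
    exact h0 D hD.1

theorem Vs_top {n : ℕ} {𝓕 : Set (Submodule F (Fin (2 * n) → F))}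
    (h𝓕 : 𝓕 = {C : Submodule F (Fin (2 * n) → F) | C = dualCode (id : F → F) C})
    [Fintype (ClassesB 𝓕)] : VsSub 𝓕 (n + 1) = ⊥ := by
  classical
  rw [eq_bot_iff]
  intro v hv
  rw [Submodule.mem_bot]
  ext b
  have hfr : ∀ C ∈ 𝓕, Module.finrank F C = n := by
    intro C hC
    rw [h𝓕] at hC
    exact sd_finrank C ((sd_iff C).1 hC)
  have h := hv (repB b).1 (by rw [hfr _ (repB b).2]; omega)
  have key : ∀ (b' : ClassesB 𝓕) (π : Equiv.Perm (Fin (2 * n))), fU (repB b).1 (permCode π (repB b').1) =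
      if permCode π (repB b').1 = (repB b).1 then (1 : ℂ) else 0 := by
    intro b' π
    unfold fU
    congr 1
    apply propext
    constructor
    · intro hle
      refine (Submodule.eq_of_le_of_finrank_eq hle ?_).symm
      rw [permCode_finrank, hfr _ (repB b).2, hfr _ (repB b').2]
    · intro he; rw [he]
  unfold Pf at h
  simp_rw [key] at h
  rw [Finset.sum_eq_single b] at h
  · refine (mul_eq_zero.1 h).resolve_right ?_
    rw [Finset.sum_boole]
    have := autCard_pos (repB b).1
    unfold autCard at this
    rw [Nat.card_eq_fintype_card, Fintype.card_subtype] at this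
    exact_mod_cast this.ne'
  · intro b' _ hne
    rw [Finset.sum_eq_zero, mul_zero]
    intro π _
    rw [if_neg]
    intro he
    apply hne
    rw [← cls_rep b', ← cls_rep b]
    exact (cls_eq_iff _ _).2 ⟨π, he⟩
  · intro h; exact absurd (Finset.mem_univ b) h

end Codes2
end KneserHeckeCodes

open KneserHeckeCodes

/-- For `q` odd and `𝓕` the family of all (Euclidean) self-dual codes in
`F_q^{2n}`, the space `Y_m` is exactly the eigenspace of the Kneser-Hecke operator `T`
with eigenvalue `ν_m = (q^{n-m} - q^m)/(q - 1)`. -/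
theorem kneserHecke_eigenspace_qE
    {F : Type} [Field F] [Fintype F] (hq : Odd (Fintype.card F)) {n : ℕ}
    (𝓕 : Set (Submodule F (Fin (2 * n) → F)))
    (h𝓕 : 𝓕 = {C : Submodule F (Fin (2 * n) → F) | C = dualCode (id : F → F) C})
    (h𝓕ne : 𝓕.Nonempty)
    (m : ℕ) (hm : m ≤ n) :
    YmSet 𝓕 m = {v : ClassesB 𝓕 → ℂ | heckeT 𝓕 n 1 v =
      ((((Fintype.card F : ℂ) ^ (n - m) - (Fintype.card F : ℂ) ^ m) /
        ((Fintype.card F : ℂ) - 1)) • v)} := by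
  letI : Fintype (ClassesB 𝓕) := Fintype.ofFinite _
  have hcl : ∀ π, ∀ C ∈ 𝓕, permCode π C ∈ 𝓕 := by
    intro π C hC
    rw [h𝓕] at hC ⊢
    exact permCode_sd π hC
  ext w
  have main := abstract_eig (heckeT 𝓕 n 1) (innerV 𝓕) n (nuE (Fintype.card F) n) (VsSub 𝓕)
    (by
      rw [eq_top_iff]
      intro v _ U hU
      exact absurd hU (Nat.not_lt_zero _))
    (fun k v hv U hU => hv U (by omega))
    (Vs_top h𝓕)
    (fun k _ v hv => hecke_step hq h𝓕 k v hv)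
    (nuE_real _ _)
    (nuE_inj Fintype.one_lt_card)
    (by
      intro x y z a
      simp only [innerV_apply, Finset.mul_sum, ← Finset.sum_sub_distrib]
      refine Finset.sum_congr rfl fun b _ => ?_
      simp only [Pi.sub_apply, Pi.smul_apply, smul_eq_mul]
      ring)
    (by
      intro x y z a
      simp only [innerV_apply, Finset.mul_sum, ← Finset.sum_sub_distrib]
      refine Finset.sum_congr rfl fun b _ => ?_
      simp only [Pi.sub_apply, Pi.smul_apply, smul_eq_mul, map_sub, map_mul]
      ring)
    (hecke_selfadj hcl n)
    inner_pd m hm w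
  change (w ∈ WmSet 𝓕 m ∧ w ∈ VmPred 𝓕 m) ↔ heckeT 𝓕 n 1 w = nuE (Fintype.card F) n m • w
  rw [← main, VmPred_eq]
  refine and_congr ?_ Iff.rfl
  change (∀ v ∈ VmSet 𝓕 m, innerV 𝓕 w v = 0) ↔ _
  refine forall_congr' fun v => ?_
  rw [mem_VmSet_iff, mem_VsSub]
end
end

section
/- Let q = r² for a prime power r, let C = C^⊥ ≤ F_q^{2n} be a Hermitian self-dual code, let 0 ≤ m ≤ n, and let c^(1), …, c^(m) ∈ C be linearly independent. Then Σ_E #{D ≤ F_q^{2n} : D = D^⊥ and D ∩ C = E} = r·(q^{n−m} − 1)/(q − 1), where the sum runs over all subspaces E ≤ C with dim E = n−1 and c^(i) ∈ E for all i. -/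
noncomputable section

open KneserHeckeCodes

section helpers

variable {F : Type} [Field F] [Fintype F]

lemma exists_sigma (r : ℕ) (hr : IsPrimePow r) (hcard : Fintype.card F = r ^ 2) :
    ∃ σ : F →+* F, (∀ x, σ x = x ^ r) ∧ ∀ x, σ (σ x) = x := by
  obtain ⟨p, k, hp, hk, rfl⟩ := hr
  have hp' : p.Prime := hp.nat_prime
  obtain ⟨p', hch⟩ := CharP.exists F
  obtain ⟨n', hp'', hc⟩ := FiniteField.card F p'
  have : p = p' := by
    rw [hc, ← pow_mul] at hcard
    have h1 : p ∣ p' ^ (n' : ℕ) := by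
      rw [hcard]; exact dvd_pow_self _ (by positivity)
    exact (Nat.prime_dvd_prime_iff_eq hp' hp'').1 (hp'.dvd_of_dvd_pow h1)
  subst this
  have : Fact p.Prime := ⟨hp'⟩
  have : ExpChar F p := ExpChar.prime hp'
  refine ⟨iterateFrobenius F p k, fun x => iterateFrobenius_def p k x, fun x => ?_⟩
  rw [iterateFrobenius_def, iterateFrobenius_def, ← pow_mul, ← sq, ← hcard, FiniteField.pow_card]

lemma mem_dualCode {N : ℕ} (f : F → F) (S : Submodule F (Fin N → F)) (v : Fin N → F) :
    v ∈ dualCode f S ↔ ∀ c ∈ S, ∑ i, v i * f (c i) = 0 := Iff.rfl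

lemma natCard_sub {N : ℕ} (S : Submodule F (Fin N → F)) :
    Nat.card S = Fintype.card F ^ Module.finrank F S := by
  rw [Module.natCard_eq_pow_finrank (K := F), Nat.card_eq_fintype_card]

/-- conjugate of a code -/
def conjCode (σ : F →+* F) (hσ : ∀ x, σ (σ x) = x) {N : ℕ} (S : Submodule F (Fin N → F)) :
    Submodule F (Fin N → F) where
  carrier := {v | (fun i => σ (v i)) ∈ S}
  add_mem' := by
    intro a b ha hb
    have := S.add_mem ha hb
    simpa [Pi.add_def] using this
  zero_mem' := by
    have := S.zero_mem
    simpa [Pi.zero_def] using this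
  smul_mem' := by
    intro c a ha
    have := S.smul_mem (σ c) ha
    simpa [Pi.smul_def] using this

lemma finrank_conj (σ : F →+* F) (hσ : ∀ x, σ (σ x) = x) {N : ℕ} (S : Submodule F (Fin N → F)) :
    Module.finrank F (conjCode σ hσ S) = Module.finrank F S := by
  have h : Nat.card (conjCode σ hσ S) = Nat.card S := by
    refine Nat.card_congr ⟨fun v => ⟨fun i => σ (v.1 i), v.2⟩,
      fun v => ⟨fun i => σ (v.1 i), ?_⟩, fun v => ?_, fun v => ?_⟩
    · change (fun i => σ (σ (v.1 i))) ∈ S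
      simp [hσ]
    · ext i; simp [hσ]
    · ext i; simp [hσ]
  rw [natCard_sub, natCard_sub] at h
  exact Nat.pow_right_injective Fintype.one_lt_card h

lemma finrank_dual (σ : F →+* F) (hσ : ∀ x, σ (σ x) = x) {N : ℕ} (S : Submodule F (Fin N → F)) :
    Module.finrank F (dualCode σ S) + Module.finrank F S = N := by
  let B : LinearMap.BilinForm F (Fin N → F) := dotProductBilin F F
  have hB : ∀ x y, B x y = ∑ i, x i * y i := fun x y => rfl
  have hnd : B.Nondegenerate := by
    constructor
    · intro x hx
      ext j
      have := hx (Pi.single j 1)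
      simpa [hB, Pi.single_apply] using this
    · intro x hx
      ext j
      have := hx (Pi.single j 1)
      simpa [hB, Pi.single_apply] using this
  have h := LinearMap.BilinForm.finrank_orthogonal hnd (conjCode σ hσ S)
  have h2 : B.orthogonal (conjCode σ hσ S) = dualCode σ S := by
    ext v
    rw [mem_dualCode, LinearMap.BilinForm.mem_orthogonal_iff]
    constructor
    · intro h c hc
      have := h (fun i => σ (c i)) (by change (fun i => σ (σ (c i))) ∈ S; simpa [hσ] using hc)
      rw [hB] at this
      simpa [mul_comm] using this
    · intro h c hc
      have := h _ hc
      rw [hB]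
      simpa [mul_comm, hσ] using this
  rw [h2, finrank_conj] at h
  have h3 := Submodule.finrank_le S
  simp only [Module.finrank_fin_fun] at h h3
  omega

lemma trace_facts (r : ℕ) (hr : 2 ≤ r) (hcard : Fintype.card F = r ^ 2) (σ : F →+* F)
    (hs : ∀ x, σ x = x ^ r) (hσ : ∀ x, σ (σ x) = x) :
    Nat.card {x : F // σ x = x} = r ∧ ∀ a, σ a = a → ∃ u, u + σ u = a := by
  classical
  let T : F →+ F := AddMonoidHom.id F + σ.toAddMonoidHom
  have hT : ∀ u, T u = u + σ u := fun u => rfl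
  let K : Finset F := Finset.univ.filter fun x => σ x = x
  have hK : K.card ≤ r := by
    have hne : (Polynomial.X ^ r - Polynomial.X : Polynomial F) ≠ 0 :=
      FiniteField.X_pow_card_sub_X_ne_zero F (by omega)
    have : K ⊆ (Polynomial.X ^ r - Polynomial.X : Polynomial F).roots.toFinset := by
      intro x hx
      simp only [K, Finset.mem_filter, Finset.mem_univ, true_and, hs] at hx
      simp [Polynomial.mem_roots hne, hx]
    refine (Finset.card_le_card this).trans ((Multiset.toFinset_card_le _).trans ?_)
    refine (Polynomial.card_roots' _).trans ?_
    rw [FiniteField.X_pow_card_sub_X_natDegree_eq F (by omega)]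
  have hker : Nat.card T.ker ≤ r := by
    have hne : (Polynomial.X ^ r + Polynomial.X : Polynomial F) ≠ 0 := by
      intro h
      have := congrArg (fun p => Polynomial.coeff p r) h
      simp [Polynomial.coeff_X, show (1:ℕ) ≠ r by omega] at this
    have : (Finset.univ.filter fun x => T x = 0) ⊆
        (Polynomial.X ^ r + Polynomial.X : Polynomial F).roots.toFinset := by
      intro x hx
      simp only [Finset.mem_filter, Finset.mem_univ, true_and, hT, hs] at hx
      simp [Polynomial.mem_roots hne, add_comm (x ^ r), hx]
    have h1 : Nat.card T.ker = (Finset.univ.filter fun x => T x = 0).card := by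
      rw [← Nat.subtype_card _ (p := fun x => T x = 0) (by simp)]
      rfl
    rw [h1]
    refine (Finset.card_le_card this).trans ((Multiset.toFinset_card_le _).trans ?_)
    refine (Polynomial.card_roots' _).trans ?_
    refine (Polynomial.natDegree_add_le _ _).trans ?_
    simp; omega
  have hprod : Nat.card T.ker * Nat.card T.range = r ^ 2 := by
    rw [← AddSubgroup.index_ker, AddSubgroup.card_mul_index, Nat.card_eq_fintype_card, hcard]
  let R : Finset F := Finset.univ.filter fun x => x ∈ T.range
  have hR : Nat.card T.range = R.card := by
    rw [← Nat.subtype_card R (p := fun x => x ∈ T.range) (by simp [R])]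
  have hsub : R ⊆ K := by
    intro x hx
    simp only [R, Finset.mem_filter, Finset.mem_univ, true_and, AddMonoidHom.mem_range] at hx
    obtain ⟨u, rfl⟩ := hx
    simp [K, hT, hσ, add_comm]
  have hRK := Finset.card_le_card hsub
  have hRr : r ≤ R.card := by
    rw [hR] at hprod
    by_contra hlt
    push Not at hlt
    nlinarith
  have heq : R = K := Finset.eq_of_subset_of_card_le hsub (by omega)
  refine ⟨?_, ?_⟩
  · rw [Nat.subtype_card K (by simp [K])]; omega
  · intro a ha
    have : a ∈ R := by rw [heq]; simp [K, ha]
    simpa [R, hT] using this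

/-- the Hermitian form, linear in the last argument -/
def bfl (σ : F →+* F) {N : ℕ} (f : Fin N → F) : (Fin N → F) →ₗ[F] F where
  toFun v := ∑ i, v i * σ (f i)
  map_add' := by intro a b; simp [add_mul, Finset.sum_add_distrib]
  map_smul' := by intro a b; simp [mul_assoc, Finset.mul_sum]

lemma bfl_apply (σ : F →+* F) {N : ℕ} (f v : Fin N → F) : bfl σ f v = ∑ i, v i * σ (f i) := rfl

lemma bfl_conj (σ : F →+* F) (hσ : ∀ x, σ (σ x) = x) {N : ℕ} (f v : Fin N → F) :
    σ (bfl σ f v) = bfl σ v f := by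
  simp [bfl_apply, hσ, mul_comm]

lemma bfl_add (σ : F →+* F) {N : ℕ} (f g v : Fin N → F) :
    bfl σ (f + g) v = bfl σ f v + bfl σ g v := by
  simp [bfl_apply, mul_add, Finset.sum_add_distrib]

lemma bfl_smul (σ : F →+* F) {N : ℕ} (a : F) (g v : Fin N → F) :
    bfl σ (a • g) v = σ a * bfl σ g v := by
  simp [bfl_apply, Finset.mul_sum, mul_left_comm]

lemma mem_dual (σ : F →+* F) {N : ℕ} (S : Submodule F (Fin N → F)) (v : Fin N → F) :
    v ∈ dualCode σ S ↔ ∀ c ∈ S, bfl σ c v = 0 := Iff.rfl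

lemma card_diff {N : ℕ} (S T : Submodule F (Fin N → F)) (h : T ≤ S) :
    Nat.card {f // f ∈ S ∧ f ∉ T} = Nat.card S - Nat.card T := by
  have := Set.ncard_diff (s := (T : Set (Fin N → F))) (t := (S : Set (Fin N → F))) h
  exact this

lemma exists_bfl_ne {N : ℕ} (σ : F →+* F) (hσ : ∀ x, σ (σ x) = x) (C : Submodule F (Fin N → F))
    (hC : C = dualCode σ C) (f : Fin N → F) (hf : f ∉ C) : ∃ c ∈ C, bfl σ f c ≠ 0 := by
  by_contra h
  push Not at h
  apply hf
  rw [hC, mem_dual]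
  intro c hc
  rw [← bfl_conj σ hσ, h c hc, map_zero]

lemma coset_count {N : ℕ} (r : ℕ) (hr : 2 ≤ r) (hcard : Fintype.card F = r ^ 2) (σ : F →+* F)
    (hs : ∀ x, σ x = x ^ r) (hσ : ∀ x, σ (σ x) = x) (C : Submodule F (Fin N → F))
    (hC : C = dualCode σ C) (f : Fin N → F) (hf : f ∉ C) :
    Nat.card {c : C // bfl σ (f + c.1) (f + c.1) = 0} * r = Nat.card C := by
  obtain ⟨hfix, hsurj⟩ := trace_facts r hr hcard σ hs hσ
  obtain ⟨c₀, hc₀, hne⟩ := exists_bfl_ne σ hσ C hC f hf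
  let T : F →+ F := AddMonoidHom.id F + σ.toAddMonoidHom
  let P : C →+ F := T.comp (((bfl σ f).comp C.subtype).toAddMonoidHom)
  have hP : ∀ c : C, P c = bfl σ f c + σ (bfl σ f c) := fun c => rfl
  have hex : ∀ a, σ a = a → ∃ c, P c = a := by
    intro a ha
    obtain ⟨u, hu⟩ := hsurj a ha
    refine ⟨⟨(u / bfl σ f c₀) • c₀, C.smul_mem _ hc₀⟩, ?_⟩
    rw [hP]
    simp only [map_smul, smul_eq_mul]
    rw [div_mul_cancel₀ _ hne, hu]
  have hrange : Nat.card P.range = r := by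
    rw [← hfix]
    refine Nat.card_congr (Equiv.subtypeEquivRight fun x => ?_)
    constructor
    · rintro ⟨c, rfl⟩
      rw [hP]; simp only [map_add, hσ, add_comm]
    · intro hx
      exact hex x hx
  have hiso : ∀ c : C, bfl σ (f + c.1) (f + c.1) = bfl σ f f + P c := by
    intro c
    have h0 : bfl σ (c : Fin N → F) (c : Fin N → F) = 0 := by
      have h1 : (c : Fin N → F) ∈ dualCode σ C := hC.le c.2
      exact (mem_dual σ C _).1 h1 _ c.2
    rw [hP, bfl_add, map_add, map_add, h0, bfl_conj σ hσ]
    ring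
  obtain ⟨d, hd⟩ := hex (-(bfl σ f f)) (by rw [map_neg, bfl_conj σ hσ])
  have hk : Nat.card {c : C // bfl σ (f + c.1) (f + c.1) = 0} = Nat.card P.ker := by
    refine Nat.card_congr ((Equiv.subRight d).subtypeEquiv fun c => ?_)
    rw [hiso]
    simp only [Equiv.subRight_apply, AddMonoidHom.mem_ker, map_sub, hd]
    rw [sub_neg_eq_add, add_comm]
  rw [hk, ← hrange, ← AddSubgroup.index_ker, AddSubgroup.card_mul_index]

lemma iso_count {N : ℕ} (r : ℕ) (hr : 2 ≤ r) (hcard : Fintype.card F = r ^ 2) (σ : F →+* F)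
    (hs : ∀ x, σ x = x ^ r) (hσ : ∀ x, σ (σ x) = x) (C U : Submodule F (Fin N → F))
    (hC : C = dualCode σ C) (hU : C ≤ U) :
    Nat.card {g // (g ∈ U ∧ g ∉ C) ∧ bfl σ g g = 0} * r = Nat.card U - Nat.card C := by
  classical
  have e : (Σ f : {f // f ∈ U ∧ f ∉ C}, {c : C // bfl σ (f.1 + c.1) (f.1 + c.1) = 0}) ≃
      {g // (g ∈ U ∧ g ∉ C) ∧ bfl σ g g = 0} × C :=
    { toFun := fun x => (⟨x.1.1 + x.2.1, ⟨U.add_mem x.1.2.1 (hU x.2.1.2),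
          fun h => x.1.2.2 ((C.add_mem_iff_left x.2.1.2).1 h)⟩, x.2.2⟩, x.2.1)
      invFun := fun y => ⟨⟨y.1.1 - y.2, U.sub_mem y.1.2.1.1 (hU y.2.2),
          fun h => y.1.2.1.2 ((C.sub_mem_iff_left y.2.2).1 h)⟩, ⟨y.2, by simpa using y.1.2.2⟩⟩
      left_inv := by
        rintro ⟨⟨f, hf⟩, ⟨c, hc⟩⟩
        simp only [Sigma.mk.injEq, Subtype.mk.injEq, add_sub_cancel_right, true_and]
        congr! <;> simp
      right_inv := by
        rintro ⟨⟨f, hf⟩, c⟩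
        simp }
  have h := Nat.card_congr e
  rw [Nat.card_sigma, Nat.card_prod] at h
  have h2 : (∑ f : {f // f ∈ U ∧ f ∉ C}, Nat.card {c : C // bfl σ (f.1 + c.1) (f.1 + c.1) = 0}) * r
      = (Nat.card U - Nat.card C) * Nat.card C := by
    rw [Finset.sum_mul, Finset.sum_congr rfl
      (fun f _ => coset_count r hr hcard σ hs hσ C hC f.1 f.2.2), Finset.sum_const,
      ← card_diff U C hU, Finset.card_univ, Nat.card_eq_fintype_card, smul_eq_mul,
      ← Nat.card_eq_fintype_card]
  rw [h] at h2
  have hpos : 0 < Nat.card C := Nat.card_pos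
  apply Nat.eq_of_mul_eq_mul_right hpos
  rw [← h2]; ring

lemma fibre_count {n : ℕ} (σ : F →+* F) (hσ : ∀ x, σ (σ x) = x)
    (C W : Submodule F (Fin (2 * (n + 1)) → F))
    (hC : C = dualCode σ C) (hW : W ≤ C) :
    Nat.card {D // D = dualCode σ D ∧ Module.finrank F ↥(D ⊓ C) = n ∧ W ≤ D} *
      (Fintype.card F ^ (n + 1) - Fintype.card F ^ n) =
    Nat.card {g // (g ∈ dualCode σ W ∧ g ∉ C) ∧ bfl σ g g = 0} := by
  classical
  have hdim : ∀ D : Submodule F (Fin (2 * (n + 1)) → F), D = dualCode σ D →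
      Module.finrank F D = n + 1 := by
    intro D hD
    have := finrank_dual σ hσ D
    rw [← hD] at this
    omega
  have hmem : ∀ D : Submodule F (Fin (2 * (n + 1)) → F), D = dualCode σ D →
      ∀ x ∈ D, ∀ y ∈ D, bfl σ x y = 0 := by
    intro D hD x hx y hy
    rw [hD, mem_dual] at hy
    exact hy x hx
  have hEdim : ∀ f, f ∉ C → Module.finrank F ↥(C ⊓ LinearMap.ker (bfl σ f)) = n := by
    intro f hf
    obtain ⟨c, hc, hne⟩ := exists_bfl_ne σ hσ C hC f hf
    have h1 := LinearMap.finrank_range_add_finrank_ker ((bfl σ f).comp C.subtype)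
    have h2 : LinearMap.range ((bfl σ f).comp C.subtype) = ⊤ := by
      rw [LinearMap.range_eq_top]
      intro u
      refine ⟨⟨(u / bfl σ f c) • c, C.smul_mem _ hc⟩, ?_⟩
      simp [div_mul_cancel₀ _ hne]
    rw [h2, finrank_top, Module.finrank_self, hdim C hC, LinearMap.ker_comp] at h1
    have h3 := (Submodule.comapSubtypeEquivOfLe (p := C ⊓ LinearMap.ker (bfl σ f))
      (q := C) inf_le_left).finrank_eq
    rw [← h3, Submodule.comap_inf, Submodule.comap_subtype_self, top_inf_eq]
    omega
  have hDdim : ∀ f, f ∉ C →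
      Module.finrank F ↥((C ⊓ LinearMap.ker (bfl σ f)) ⊔ Submodule.span F {f}) = n + 1 := by
    intro f hf
    have h1 := Submodule.finrank_sup_add_finrank_inf_eq (C ⊓ LinearMap.ker (bfl σ f))
      (Submodule.span F {f})
    have hf0 : f ≠ 0 := fun h => hf (h ▸ C.zero_mem)
    have h2 : (C ⊓ LinearMap.ker (bfl σ f)) ⊓ Submodule.span F {f} = ⊥ := by
      rw [← disjoint_iff, Submodule.disjoint_span_singleton' hf0]
      exact fun h => hf h.1
    rw [h2, hEdim f hf, finrank_span_singleton hf0, finrank_bot] at h1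
    omega
  let φ : (Σ D : {D // D = dualCode σ D ∧ Module.finrank F ↥(D ⊓ C) = n ∧ W ≤ D},
      {f // f ∈ D.1 ∧ f ∉ D.1 ⊓ C}) → {g // (g ∈ dualCode σ W ∧ g ∉ C) ∧ bfl σ g g = 0} :=
    fun x => ⟨x.2.1, ⟨by
      rw [mem_dual]
      intro c hc
      exact hmem _ x.1.2.1 _ (x.1.2.2.2 hc) _ x.2.2.1, fun h => x.2.2.2 ⟨x.2.2.1, h⟩⟩,
      hmem _ x.1.2.1 _ x.2.2.1 _ x.2.2.1⟩
  have huniq : ∀ D : Submodule F (Fin (2 * (n + 1)) → F), D = dualCode σ D →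
      Module.finrank F ↥(D ⊓ C) = n → ∀ f ∈ D, f ∉ C →
      D = (C ⊓ LinearMap.ker (bfl σ f)) ⊔ Submodule.span F {f} := by
    intro D hD hn f hfD hfC
    have h1 : D ⊓ C = C ⊓ LinearMap.ker (bfl σ f) := by
      apply Submodule.eq_of_le_of_finrank_eq
      · intro x hx
        exact ⟨hx.2, hmem D hD f hfD x hx.1⟩
      · rw [hn, hEdim f hfC]
    symm
    apply Submodule.eq_of_le_of_finrank_eq
    · rw [← h1]
      refine sup_le inf_le_left ?_
      rw [Submodule.span_singleton_le_iff_mem]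
      exact hfD
    · rw [hDdim f hfC, hdim D hD]
  have hφ : Function.Bijective φ := by
    constructor
    · rintro ⟨⟨D, hD⟩, ⟨f, hf⟩⟩ ⟨⟨D', hD'⟩, ⟨f', hf'⟩⟩ h
      have hff : f = f' := congrArg Subtype.val h
      subst hff
      have h1 := huniq D hD.1 hD.2.1 f hf.1 (fun h => hf.2 ⟨hf.1, h⟩)
      have h2 := huniq D' hD'.1 hD'.2.1 f hf'.1 (fun h => hf'.2 ⟨hf'.1, h⟩)
      have : D = D' := h1.trans h2.symm
      subst this
      rfl
    · rintro ⟨f, ⟨hfW, hfC⟩, hff⟩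
      set D := (C ⊓ LinearMap.ker (bfl σ f)) ⊔ Submodule.span F {f} with hDdef
      have hfD : f ∈ D := Submodule.mem_sup_right (Submodule.mem_span_singleton_self f)
      have hort : ∀ x ∈ D, ∀ y ∈ D, bfl σ x y = 0 := by
        intro x hx y hy
        obtain ⟨x1, hx1, x2, hx2, rfl⟩ := Submodule.mem_sup.1 hx
        obtain ⟨y1, hy1, y2, hy2, rfl⟩ := Submodule.mem_sup.1 hy
        obtain ⟨a, rfl⟩ := Submodule.mem_span_singleton.1 hx2
        obtain ⟨b, rfl⟩ := Submodule.mem_span_singleton.1 hy2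
        have e1 : bfl σ x1 y1 = 0 := hmem C hC _ hx1.1 _ hy1.1
        have e2 : bfl σ f y1 = 0 := hy1.2
        have e3 : bfl σ x1 f = 0 := by
          rw [← bfl_conj σ hσ, show bfl σ f x1 = 0 from hx1.2, map_zero]
        simp [bfl_add, bfl_smul, e1, e2, e3, hff]
      have hDD : D = dualCode σ D := by
        apply Submodule.eq_of_le_of_finrank_eq
        · intro y hy
          rw [mem_dual]
          exact fun c hc => hort c hc y hy
        · have h1 := finrank_dual σ hσ D
          have h2 := hDdim f hfC
          rw [← hDdef] at h2
          omega
      have hDC : D ⊓ C = C ⊓ LinearMap.ker (bfl σ f) := by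
        apply le_antisymm
        · intro x hx
          exact ⟨hx.2, hort f hfD x hx.1⟩
        · exact le_inf le_sup_left inf_le_left
      have hWD : W ≤ D := by
        intro w hw
        refine Submodule.mem_sup_left ⟨hW hw, ?_⟩
        change bfl σ f w = 0
        rw [mem_dual] at hfW
        rw [← bfl_conj σ hσ, hfW w hw, map_zero]
      exact ⟨⟨⟨D, hDD, by rw [hDC, hEdim f hfC], hWD⟩, ⟨f, hfD, fun h => hfC h.2⟩⟩, rfl⟩
  have h := Nat.card_congr (Equiv.ofBijective φ hφ)
  rw [← h]
  letI : Fintype {D // D = dualCode σ D ∧ Module.finrank F ↥(D ⊓ C) = n ∧ W ≤ D} :=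
    Fintype.ofFinite _
  rw [Nat.card_sigma]
  rw [Finset.sum_congr rfl (g := fun _ => Fintype.card F ^ (n + 1) - Fintype.card F ^ n)]
  · rw [Finset.sum_const, Finset.card_univ, Nat.card_eq_fintype_card, smul_eq_mul]
  · intro D _
    rw [card_diff D.1 (D.1 ⊓ C) inf_le_left, natCard_sub, natCard_sub, hdim _ D.2.1, D.2.2.1]

end helpers

/-- For `q = r²`, a Hermitian self-dual code `C ≤ F_q^{2n}` and linearly
independent `c^(1), …, c^(m) ∈ C` (`m ≤ n`), the number of pairs `(E, D)` with `E ≤ C`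
of dimension `n-1` containing all `c^(i)` and `D` Hermitian self-dual with `D ∩ C = E`
equals `r·(q^{n-m} - 1)/(q - 1)`. -/
theorem sum_alphaE_qH
    {F : Type} [Field F] [Fintype F] (r : ℕ) (hr : IsPrimePow r)
    (hcard : Fintype.card F = r ^ 2) {n : ℕ}
    (C : Submodule F (Fin (2 * n) → F)) (hC : C = dualCode (fun x : F => x ^ r) C)
    {m : ℕ} (hm : m ≤ n) (c : Fin m → (Fin (2 * n) → F)) (hc : ∀ j, c j ∈ C)
    (hind : LinearIndependent F c) :
    Nat.card {ED : Submodule F (Fin (2 * n) → F) × Submodule F (Fin (2 * n) → F) //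
        ED.1 ≤ C ∧ Module.finrank F ↥ED.1 + 1 = n ∧ (∀ j, c j ∈ ED.1) ∧
        ED.2 = dualCode (fun x : F => x ^ r) ED.2 ∧ ED.2 ⊓ C = ED.1} =
      r * ((Fintype.card F ^ (n - m) - 1) / (Fintype.card F - 1)) := by
  have hr2 : 2 ≤ r := hr.two_le
  obtain ⟨σ, hs, hσ⟩ := exists_sigma r hr hcard
  have hfun : (fun x : F => x ^ r) = σ := by ext x; exact (hs x).symm
  rw [hfun] at hC
  rw [hfun]
  rcases n with _ | k
  · have : IsEmpty {ED : Submodule F (Fin (2 * 0) → F) × Submodule F (Fin (2 * 0) → F) //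
        ED.1 ≤ C ∧ Module.finrank F ↥ED.1 + 1 = 0 ∧ (∀ j, c j ∈ ED.1) ∧
        ED.2 = dualCode σ ED.2 ∧ ED.2 ⊓ C = ED.1} := ⟨fun x => by
          have := x.2.2.1
          omega⟩
    rw [Nat.card_of_isEmpty]
    simp
  · set W := Submodule.span F (Set.range c) with hWdef
    have hWC : W ≤ C := by
      rw [hWdef, Submodule.span_le]
      rintro _ ⟨j, rfl⟩
      exact hc j
    have hWdim : Module.finrank F W = m := by
      rw [hWdef, finrank_span_eq_card hind, Fintype.card_fin]
    have hCU : C ≤ dualCode σ W := by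
      intro x hx
      rw [hC, mem_dual] at hx
      rw [mem_dual]
      exact fun w hw => hx w (hWC hw)
    have h1 := fibre_count σ hσ C W hC hWC
    have h2 := iso_count r hr2 hcard σ hs hσ C (dualCode σ W) hC hCU
    have hUd := finrank_dual σ hσ W
    have hCd := finrank_dual σ hσ C
    rw [← hC] at hCd
    rw [natCard_sub, natCard_sub, show Module.finrank F C = k + 1 by omega,
      show Module.finrank F (dualCode σ W) = (k + 1) + (k + 1 - m) by omega, ← h1] at h2
    have e : {ED : Submodule F (Fin (2 * (k + 1)) → F) × Submodule F (Fin (2 * (k + 1)) → F) //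
        ED.1 ≤ C ∧ Module.finrank F ↥ED.1 + 1 = k + 1 ∧ (∀ j, c j ∈ ED.1) ∧
        ED.2 = dualCode σ ED.2 ∧ ED.2 ⊓ C = ED.1} ≃
        {D // D = dualCode σ D ∧ Module.finrank F ↥(D ⊓ C) = k ∧ W ≤ D} :=
      { toFun := fun x => ⟨x.1.2, x.2.2.2.2.1, by
          rw [x.2.2.2.2.2]
          have := x.2.2.1
          omega, by
          rw [hWdef, Submodule.span_le]
          rintro _ ⟨j, rfl⟩
          have := x.2.2.2.1 j
          rw [← x.2.2.2.2.2] at this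
          exact this.1⟩
        invFun := fun D => ⟨(D.1 ⊓ C, D.1), inf_le_right, by
          have := D.2.2.1
          simp only [this], fun j =>
          ⟨D.2.2.2 (Submodule.subset_span ⟨j, rfl⟩), hc j⟩, D.2.1, rfl⟩
        left_inv := by
          rintro ⟨⟨E, D⟩, hED⟩
          simp only [Subtype.mk.injEq, Prod.mk.injEq, and_true]
          exact hED.2.2.2.2
        right_inv := fun D => rfl }
    rw [Nat.card_congr e]
    generalize Nat.card {D // D = dualCode σ D ∧ Module.finrank F ↥(D ⊓ C) = k ∧ W ≤ D} = X at h2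
    obtain ⟨G, hG⟩ : Fintype.card F - 1 ∣ Fintype.card F ^ (k + 1 - m) - 1 :=
      Nat.sub_one_dvd_pow_sub_one _ _
    have hq : 1 < Fintype.card F := Fintype.one_lt_card
    rw [hG, Nat.mul_div_cancel_left _ (by omega)]
    have e1 : Fintype.card F ^ (k + 1) - Fintype.card F ^ k
        = Fintype.card F ^ k * (Fintype.card F - 1) := by
      rw [Nat.mul_sub, mul_one, pow_succ]
    have e2 : Fintype.card F ^ (k + 1 + (k + 1 - m)) - Fintype.card F ^ (k + 1)
        = Fintype.card F ^ k * r ^ 2 * ((Fintype.card F - 1) * G) := by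
      rw [← hG, Nat.mul_sub, mul_one, pow_add, pow_succ, ← hcard]
    rw [e1, e2] at h2
    have hpos : 0 < Fintype.card F ^ k * (Fintype.card F - 1) * r :=
      Nat.mul_pos (Nat.mul_pos (pow_pos (by omega) _) (by omega)) (by omega)
    apply Nat.eq_of_mul_eq_mul_right hpos
    linear_combination h2
end
end

section
/- Let q be odd, let C ≤ F_q^{2n} be a self-dual code, and let E ≤ C be a subspace of dimension n−1. Then the number of self-dual codes D ≤ F_q^{2n} with E ≤ D is exactly 2. -/
noncomputable section

open KneserHeckeCodes

section Aux
variable {F : Type} [Field F] [Fintype F] {N : ℕ}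

theorem mem_dual_aux (D : Submodule F (Fin N → F)) (v : Fin N → F) :
    v ∈ dualCode (id : F → F) D ↔ ∀ c ∈ D, v ⬝ᵥ c = 0 := Iff.rfl

theorem finrank_dual_aux (D : Submodule F (Fin N → F)) :
    Module.finrank F ↥D + Module.finrank F ↥(dualCode (id : F → F) D) = N := by
  have h : dualCode (id : F → F) D
      = D.dualAnnihilator.comap (dotProductEquiv F (Fin N)).toLinearMap := by
    ext v
    rw [mem_dual_aux, Submodule.mem_comap, Submodule.mem_dualAnnihilator]
    rfl
  have h2 := LinearEquiv.finrank_eq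
    ((dotProductEquiv F (Fin N)).symm.submoduleMap D.dualAnnihilator)
  rw [h, Submodule.comap_equiv_eq_map_symm]
  have h3 := Subspace.finrank_add_finrank_dualAnnihilator_eq D
  rw [Module.finrank_fin_fun] at h3
  omega

theorem dual_anti_aux {D D' : Submodule F (Fin N → F)} (h : D ≤ D') :
    dualCode (id : F → F) D' ≤ dualCode (id : F → F) D :=
  fun _ hv c hc => hv c (h hc)

theorem eq_of_le_aux {D D' : Submodule F (Fin N → F)} (h : D ≤ D')
    (hD : D = dualCode (id : F → F) D) (hD' : D' = dualCode (id : F → F) D') : D = D' := by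
  apply le_antisymm h
  rw [hD', hD]
  exact dual_anti_aux h

end Aux


/-- For `q` odd, a self-dual code `C ≤ F_q^{2n}` and a subspace `E ≤ C` of
dimension `n-1`, there are exactly `2` self-dual codes `D` with `E ≤ D`. -/
theorem selfDual_count_above_qE
    {F : Type} [Field F] [Fintype F] (hq : Odd (Fintype.card F)) {n : ℕ}
    (C : Submodule F (Fin (2 * n) → F)) (hC : C = dualCode (id : F → F) C)
    (E : Submodule F (Fin (2 * n) → F)) (hE : E ≤ C)
    (hdim : Module.finrank F ↥E + 1 = n) :
    Nat.card {D : Submodule F (Fin (2 * n) → F) //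
        D = dualCode (id : F → F) D ∧ E ≤ D} = 2 := by
  have two : (2 : F) ≠ 0 := by
    intro h2
    have hr : ringChar F ≠ 2 := by
      intro h
      have := FiniteField.even_card_iff_char_two.mp h
      rw [Nat.odd_iff] at hq
      omega
    exact Ring.two_ne_zero hr h2
  have fC := finrank_dual_aux C
  rw [← hC] at fC
  have fE := finrank_dual_aux E
  have hlt : E < C := by
    refine lt_of_le_of_ne hE ?_
    rintro rfl
    omega
  obtain ⟨c, hcC, hcE⟩ := SetLike.exists_of_lt hlt
  have hCE : (Submodule.span F {c} ⊔ E) = C := by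
    have h1 : E < Submodule.span F {c} ⊔ E := (Submodule.covBy_span_singleton_sup hcE).lt
    have h2 : Submodule.span F {c} ⊔ E ≤ C := by
      simp [hcC, hE]
    apply Submodule.eq_of_le_of_finrank_le h2
    have := Submodule.finrank_lt_finrank_of_lt h1
    omega
  have hCE' : C ≤ dualCode (id : F → F) E := by
    rw [hC]; exact dual_anti_aux hE
  have hlt' : C < dualCode (id : F → F) E := by
    refine lt_of_le_of_ne hCE' ?_
    intro h
    rw [← h] at fE
    omega
  have iso : ∀ D : Submodule F (Fin (2 * n) → F), D = dualCode (id : F → F) D →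
      ∀ x ∈ D, ∀ y ∈ D, x ⬝ᵥ y = 0 := by
    intro D hD x hx y hy
    rw [hD] at hx
    exact hx y hy
  -- membership in C for vectors of the dual of E
  have memC : ∀ v ∈ dualCode (id : F → F) E, v ⬝ᵥ c = 0 → v ∈ C := by
    intro v hv hvc
    rw [hC, mem_dual_aux]
    intro w hw
    rw [← hCE] at hw
    obtain ⟨a, ha, e, he, rfl⟩ := Submodule.mem_sup.mp hw
    obtain ⟨t, rfl⟩ := Submodule.mem_span_singleton.mp ha
    have := (mem_dual_aux E v).mp hv e he
    simp [dotProduct_add, dotProduct_smul, hvc, this]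
  obtain ⟨x, hxE, hxC⟩ := SetLike.exists_of_lt hlt'
  have hxc : x ⬝ᵥ c ≠ 0 := fun h => hxC (memC x hxE h)
  have hcc : c ⬝ᵥ c = 0 := iso C hC c hcC c hcC
  obtain ⟨y, hyE, hyc, hyy⟩ : ∃ y ∈ dualCode (id : F → F) E, y ⬝ᵥ c ≠ 0 ∧ y ⬝ᵥ y = 0 := by
    refine ⟨x + (-(x ⬝ᵥ x) / (2 * (x ⬝ᵥ c))) • c, ?_, ?_, ?_⟩
    · exact Submodule.add_mem _ hxE (Submodule.smul_mem _ _ (hCE' hcC))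
    · simpa [add_dotProduct, hcc] using hxc
    · simp only [add_dotProduct, dotProduct_add, smul_dotProduct, dotProduct_smul, hcc,
        dotProduct_comm c x, smul_eq_mul]
      field_simp
      ring
  have hcy : c ⬝ᵥ y ≠ 0 := by rwa [dotProduct_comm]
  have decomp : ∀ v ∈ dualCode (id : F → F) E, ∃ e ∈ E, ∃ a b : F, v = e + a • c + b • y := by
    intro v hv
    have hm : v - ((v ⬝ᵥ c) / (y ⬝ᵥ c)) • y ∈ C := by
      apply memC
      · exact Submodule.sub_mem _ hv (Submodule.smul_mem _ _ hyE)
      · simp only [sub_dotProduct, smul_dotProduct, smul_eq_mul]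
        field_simp
        ring
    rw [← hCE] at hm
    obtain ⟨a, ha, e, he, h⟩ := Submodule.mem_sup.mp hm
    obtain ⟨t, rfl⟩ := Submodule.mem_span_singleton.mp ha
    refine ⟨e, he, t, (v ⬝ᵥ c) / (y ⬝ᵥ c), ?_⟩
    rw [add_comm e, h, sub_add_cancel]
  have hEE : ∀ e ∈ E, ∀ e' ∈ E, e ⬝ᵥ e' = 0 := fun e he e' he' =>
    iso C hC e (hE he) e' (hE he')
  have hyE' : ∀ e ∈ E, y ⬝ᵥ e = 0 := fun e he => hyE e he
  have hEy : ∀ e ∈ E, e ⬝ᵥ y = 0 := fun e he => by rw [dotProduct_comm]; exact hyE' e he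
  set D0 : Submodule F (Fin (2 * n) → F) := Submodule.span F {y} ⊔ E with hD0def
  have hyD0 : y ∈ D0 := Submodule.mem_sup_left (Submodule.mem_span_singleton_self y)
  have hED0 : E ≤ D0 := le_sup_right
  have hD0 : D0 = dualCode (id : F → F) D0 := by
    apply le_antisymm
    · intro v hv
      rw [mem_dual_aux]
      intro w hw
      obtain ⟨a, ha, e, he, rfl⟩ := Submodule.mem_sup.mp hv
      obtain ⟨t, rfl⟩ := Submodule.mem_span_singleton.mp ha
      obtain ⟨a', ha', e', he', rfl⟩ := Submodule.mem_sup.mp hw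
      obtain ⟨t', rfl⟩ := Submodule.mem_span_singleton.mp ha'
      simp [add_dotProduct, dotProduct_add, hyy, hyE' e' he', hEy e he, hEE e he e' he']
    · intro v hv
      obtain ⟨e, he, a, b, rfl⟩ := decomp v (dual_anti_aux hED0 hv)
      have h := (mem_dual_aux D0 _).mp hv y hyD0
      simp only [add_dotProduct, smul_dotProduct, hyy, hEy e he, smul_eq_mul, mul_zero, add_zero,
        zero_add, mul_eq_zero, hcy, or_false] at h
      subst h
      rw [zero_smul, add_zero]
      exact Submodule.add_mem _ (hED0 he) (Submodule.smul_mem _ _ hyD0)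
  rw [Nat.card_eq_two_iff]
  refine ⟨⟨C, hC, hE⟩, ⟨D0, hD0, hED0⟩, ?_, ?_⟩
  · intro h
    have h' : C = D0 := congrArg Subtype.val h
    exact hyc (iso C hC y (h' ▸ hyD0) c hcC)
  · rw [Set.eq_univ_iff_forall]
    rintro ⟨D, hD, hED⟩
    simp only [Set.mem_insert_iff, Set.mem_singleton_iff, Subtype.mk.injEq]
    by_cases hDC : D ≤ C
    · exact Or.inl (eq_of_le_aux hDC hD hC)
    · right
      obtain ⟨d, hd, hdC⟩ := SetLike.not_le_iff_exists.mp hDC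
      have hdE : d ∈ dualCode (id : F → F) E := by
        rw [hD] at hd
        exact dual_anti_aux hED hd
      obtain ⟨e, he, a, b, rfl⟩ := decomp d hdE
      have hb : b ≠ 0 := by
        rintro rfl
        apply hdC
        rw [zero_smul, add_zero]
        exact Submodule.add_mem _ (hE he) (Submodule.smul_mem _ _ hcC)
      have hd' : a • c + b • y ∈ D := by
        have := Submodule.sub_mem _ hd (hED he)
        rwa [add_assoc, add_sub_cancel_left] at this
      have h := iso D hD _ hd' _ hd'
      simp only [add_dotProduct, dotProduct_add, smul_dotProduct, dotProduct_smul, hcc, hyy,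
        dotProduct_comm c y, smul_eq_mul, mul_zero, add_zero, zero_add] at h
      have h2 : 2 * b * (y ⬝ᵥ c) * a = 0 := by linear_combination h
      have ha : a = 0 := by
        rcases mul_eq_zero.mp h2 with h3 | h3
        · exact absurd h3 (mul_ne_zero (mul_ne_zero two hb) hyc)
        · exact h3
      subst ha
      rw [zero_smul, zero_add] at hd'
      have hyD : y ∈ D := (Submodule.smul_mem_iff _ hb).mp hd'
      refine (eq_of_le_aux ?_ hD0 hD).symm
      rw [hD0def]
      simp [hyD, hED]
end
end

section
/- Let C_1, …, C_k ≤ F_q^N be pairwise inequivalent self-dual codes, where N = 2n. Then their genus-n complete weight enumerators cwe_n(C_1), …, cwe_n(C_k) are linearly independent over ℂ. -/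
noncomputable section

open KneserHeckeCodes

theorem finrank_le_of_selfDual {F : Type} [Field F] [Fintype F] {n : ℕ}
    (σ : F →+* F) (hσ : ∀ x, σ (σ x) = x) (C : Submodule F (Fin (2 * n) → F))
    (h : C = dualCode (⇑σ) C) : Module.finrank F C ≤ n := by
  let b := Module.finBasis F C
  let v : Fin (Module.finrank F C) → (Fin (2 * n) → F) := fun i => (b i : Fin (2 * n) → F)
  have hv : LinearIndependent F v :=
    b.linearIndependent.map' C.subtype (Submodule.ker_subtype C)
  let j : (Fin (2 * n) → F) →+ (Fin (2 * n) → F) := (σ : F →+ F).compLeft (Fin (2 * n))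
  have hjv : LinearIndependent F (j ∘ v) := by
    refine hv.map_of_injective_injective σ j ?_ ?_ ?_
    · intro r hr
      exact (map_eq_zero σ).1 hr
    · intro m hm
      funext i
      have := congrFun hm i
      exact (map_eq_zero σ).1 this
    · intro r m
      funext i
      change σ (σ r * m i) = r * σ (m i)
      rw [map_mul, hσ]
  let A : Matrix (Fin (Module.finrank F C)) (Fin (2 * n)) F := Matrix.of v
  let B : Matrix (Fin (Module.finrank F C)) (Fin (2 * n)) F := Matrix.of (j ∘ v)
  have hA : A.rank = Module.finrank F C := by
    have := LinearIndependent.rank_matrix (M := A) hv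
    simpa using this
  have hB : B.rank = Module.finrank F C := by
    have := LinearIndependent.rank_matrix (M := B) hjv
    simpa using this
  have h0 : A * B.transpose = 0 := by
    ext a c
    have ha : v a ∈ dualCode (⇑σ) C := h ▸ (b a).2
    exact ha (v c) (b c).2
  have := Matrix.rank_add_rank_le_card_of_mul_eq_zero h0
  rw [Matrix.rank_transpose, hA, hB] at this
  simp at this
  omega

theorem exists_perm_of_mon_eq {F : Type} [Field F] [Fintype F] {m N : ℕ}
    (c d : Fin m → (Fin N → F)) (h : mon c = mon d) :
    ∃ π : Equiv.Perm (Fin N), ∀ j i, d j (π i) = c j i := by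
  have e : ∀ v : Fin m → F, Nonempty
      ({ i : Fin N // (fun j => c j i) = v } ≃ { i : Fin N // (fun j => d j i) = v }) := by
    intro v
    have hv := congrFun h v
    simp only [mon] at hv
    obtain ⟨e⟩ := (Finite.card_eq).1 hv
    exact ⟨((Equiv.subtypeEquivRight fun i => funext_iff).trans e).trans
      (Equiv.subtypeEquivRight fun i => funext_iff.symm)⟩
  refine ⟨Equiv.ofFiberEquiv fun v => (e v).some, fun j i => ?_⟩
  exact congrFun (Equiv.ofFiberEquiv_map (fun v => (e v).some) i) j

theorem equiv_of_mon_eq {F : Type} [Field F] [Fintype F] {n N : ℕ}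
    (σ : F →+* F) (C D : Submodule F (Fin N → F))
    (hC : C = dualCode (⇑σ) C) (hD : D = dualCode (⇑σ) D)
    (c d : Fin n → (Fin N → F)) (hc : ∀ j, c j ∈ C)
    (hd : Submodule.span F (Set.range d) = D) (h : mon c = mon d) : equivCode C D := by
  obtain ⟨π, hπ⟩ := exists_perm_of_mon_eq d c h.symm
  have hDC : ∀ x ∈ D, (fun i => x (π.symm i)) ∈ C := by
    intro x hx
    have : D ≤ C.comap (LinearMap.funLeft F F π.symm) := by
      rw [← hd, Submodule.span_le]
      rintro _ ⟨j, rfl⟩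
      change (fun i => d j (π.symm i)) ∈ C
      convert hc j using 1
      funext i
      rw [← hπ]; simp
    exact this hx
  refine ⟨π, le_antisymm ?_ ?_⟩
  · rintro _ ⟨x, hx, rfl⟩
    rw [hD]
    intro y hy
    have hx' : x ∈ dualCode (⇑σ) C := hC ▸ hx
    have := hx' _ (hDC y hy)
    rw [← this, ← Equiv.sum_comp π (fun i => x i * σ (y (π.symm i)))]
    simp [LinearMap.funLeft]
  · intro x hx
    refine ⟨_, hDC x hx, ?_⟩
    funext i
    simp [LinearMap.funLeft]

theorem exists_span_tuple {F : Type} [Field F] [Fintype F] {n N : ℕ}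
    (C : Submodule F (Fin N → F)) (h : Module.finrank F C ≤ n) :
    ∃ d : Fin n → C, Submodule.span F (Set.range fun j => (d j : Fin N → F)) = C := by
  let b := Module.finBasis F C
  refine ⟨fun j => if hj : (j : ℕ) < Module.finrank F C then b ⟨j, hj⟩ else 0, ?_⟩
  apply le_antisymm
  · rw [Submodule.span_le]
    rintro _ ⟨j, rfl⟩
    exact Subtype.property _
  · intro x hx
    have hx' : (⟨x, hx⟩ : C) ∈ Submodule.span F (Set.range b) := by
      rw [b.span_eq]; trivial
    have h2 := Submodule.mem_map_of_mem (f := C.subtype) hx'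
    rw [Submodule.map_span] at h2
    refine Submodule.span_mono ?_ h2
    rintro _ ⟨_, ⟨i, rfl⟩, rfl⟩
    refine ⟨⟨i, by omega⟩, ?_⟩
    simp

theorem coeff_cwe {F : Type} [Field F] [Fintype F] {m N : ℕ}
    (C : Submodule F (Fin N → F)) (X : (Fin m → F) → ℕ) :
    ∃ a : ℕ, MvPolynomial.coeff (Finsupp.equivFunOnFinite.symm X) (cwe m C) = (a : ℂ) ∧
      (a ≠ 0 ↔ ∃ c : Fin m → C, mon (fun j => (c j : Fin N → F)) = X) := by
  classical
  letI : Fintype C := Fintype.ofFinite _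
  refine ⟨(Finset.univ.filter fun c : Fin m → C =>
    mon (fun j => (c j : Fin N → F)) = X).card, ?_, ?_⟩
  · simp only [cwe, MvPolynomial.coeff_sum, MvPolynomial.coeff_monomial,
      EmbeddingLike.apply_eq_iff_eq]
    rw [Finset.sum_boole]
  · rw [Finset.card_ne_zero, Finset.Nonempty]
    simp

/-- The genus-`n` complete weight enumerators of pairwise inequivalent
self-dual codes in `F_q^{2n}` are linearly independent over `ℂ`. -/
theorem cwe_genus_n_linearIndependent
    {F : Type} [Field F] [Fintype F] {n : ℕ}
    (σ : F →+* F) (hσ : ∀ x, σ (σ x) = x)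
    {k : ℕ} (C : Fin k → Submodule F (Fin (2 * n) → F))
    (hsd : ∀ i, C i = dualCode (⇑σ) (C i))
    (hineq : ∀ i j, i ≠ j → ¬ equivCode (C i) (C j)) :
    LinearIndependent ℂ (fun i => cwe n (C i)) := by
  choose d hd using fun i => exists_span_tuple (n := n) (C i)
    (finrank_le_of_selfDual σ hσ (C i) (hsd i))
  rw [Fintype.linearIndependent_iff]
  intro g hg i
  let X := mon (fun j => (d i j : Fin (2 * n) → F))
  have h0 := congrArg (MvPolynomial.coeff (Finsupp.equivFunOnFinite.symm X)) hg
  rw [MvPolynomial.coeff_sum, Finset.sum_eq_single i] at h0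
  · obtain ⟨a, ha, ha'⟩ := coeff_cwe (C i) X
    have hane := ha'.2 ⟨d i, rfl⟩
    rw [MvPolynomial.coeff_smul, ha] at h0
    simpa [hane] using h0
  · intro j _ hji
    obtain ⟨a, ha, ha'⟩ := coeff_cwe (C j) X
    have : a = 0 := by
      by_contra hne
      obtain ⟨c, hc⟩ := ha'.1 hne
      exact hineq j i hji (equiv_of_mon_eq σ (C j) (C i) (hsd j) (hsd i) _ _
        (fun l => (c l).2) (hd i) hc)
    rw [MvPolynomial.coeff_smul, ha, this]
    simp
  · simp
end
end
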